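/- Let (A, φ) be a noncommutative probability space, Φ : T(T_+(A)) → ℂ the character extending φ, Φ̃ : H_S(A) → ℂ the character extending φ, ρ̃ = log*(Φ̃), and ι : T(T_+(A)) → H_S(A) the algebra morphism with ι(a_1⋯a_n) = Σ_{t∈ST(n)} t ⊗ a_1⋯a_n. Then ρ := ρ̃ ∘ ι is an infinitesimal character on T(T_+(A)) and Φ = exp*(ρ). -/

import Mathlib

open scoped BigOperators

/-- Planar rooted trees (rose trees). -/
inductive PTree : Type
  | node : List PTree → PTree

namespace PTree

/-- The single-vertex tree (a leaf). -/
abbrev leaf : PTree := .node []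

/-- Subtree at a given path from the root (entries select children). -/
def subtreeAt : List ℕ → PTree → Option PTree
  | [], t => some t
  | i :: p, node cs => (cs[i]?).bind (subtreeAt p)

/-- `p` is (the path of) a vertex of `t`. -/
def IsVertex (t : PTree) (p : List ℕ) : Prop := (subtreeAt p t).isSome

/-- `p` is a leaf of `t`. -/
def IsLeafAt (t : PTree) (p : List ℕ) : Prop := subtreeAt p t = some leaf

/-- `p` is an internal (non-leaf) vertex of `t`. -/
def IsInternalAt (t : PTree) (p : List ℕ) : Prop :=
  ∃ cs, subtreeAt p t = some (node cs) ∧ cs ≠ []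

/-- Schröder trees: every internal vertex has at least two children. -/
inductive IsSchroder : PTree → Prop
  | leaf : IsSchroder (node [])
  | node (cs : List PTree) : 2 ≤ cs.length → (∀ c ∈ cs, IsSchroder c) → IsSchroder (node cs)

/-- Number of leaves of a tree. -/
noncomputable def numLeaves (t : PTree) : ℕ := Nat.card {p : List ℕ // IsLeafAt t p}

/-- Number of sectors between consecutive leaves. -/
noncomputable def numSectors (t : PTree) : ℕ := numLeaves t - 1

/-- Number of internal vertices. -/
noncomputable def numInternal (t : PTree) : ℕ := Nat.card {p : List ℕ // IsInternalAt t p}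

/-- The set of Schröder trees with `n+1` leaves. -/
def ST (n : ℕ) : Set PTree := {t | IsSchroder t ∧ numLeaves t = n + 1}

/-- Number of surjective strictly order-preserving maps from the poset of internal
vertices of `t` (i.e. the vertex poset of the skeleton `sk(t)`, with the root minimal,
the order being the ancestor/prefix order) onto `{1, …, k}`. This is `ω_k(sk(t))`. -/
noncomputable def omegaSkK (t : PTree) (k : ℕ) : ℕ :=
  Nat.card {f : {p : List ℕ // IsInternalAt t p} → Fin k //
    Function.Surjective f ∧ ∀ v w, v.1 <+: w.1 → v ≠ w → f v < f w}

/-- The Murua coefficient `ω(sk(t))` of the skeleton of `t`. -/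
noncomputable def omegaSk (t : PTree) : ℂ :=
  ∑ k ∈ Finset.Icc 1 (numInternal t), ((-1 : ℂ) ^ (k + 1) / (k : ℂ)) * (omegaSkK t k : ℂ)

/-- The subtree of `t` at path `p` (junk value: a leaf). -/
noncomputable def subtree! (t : PTree) (p : List ℕ) : PTree := (subtreeAt p t).getD leaf

/-- Number of leaves of `t` strictly to the left of the subtree at `p`. -/
noncomputable def leavesBefore (t : PTree) (p : List ℕ) : ℕ :=
  Nat.card {q : List ℕ // IsLeafAt t q ∧ List.Lex (· < ·) q p ∧ ¬ p <+: q}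

/-- Sector number `i` (0-indexed: the sector between the `(i+1)`-st and `(i+2)`-nd leaves of `t`)
lies strictly inside the subtree of `t` rooted at `p`. -/
def SectorIn (t : PTree) (p : List ℕ) (i : ℕ) : Prop :=
  leavesBefore t p ≤ i ∧ i + 2 ≤ leavesBefore t p + numLeaves (subtree! t p)

/-- The internal vertex `v` of `t` owns sector `i`: the sector lies in the corolla at `v`,
i.e. inside the subtree at `v` but not inside the subtree at any strictly deeper vertex. -/
def OwnsSector (t : PTree) (v : List ℕ) (i : ℕ) : Prop :=
  IsInternalAt t v ∧ SectorIn t v i ∧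
    ∀ w, IsInternalAt t w → v <+: w → w ≠ v → ¬ SectorIn t w i

/-- Sectors `i` and `j` belong to the same block of the noncrossing partition `π(t)`. -/
def SameOwner (t : PTree) (i j : ℕ) : Prop := ∃ v, OwnsSector t v i ∧ OwnsSector t v j

open Classical in
/-- `φ_{π(t)}(a_1,…,a_n)`: the product over the blocks of the noncrossing partition `π(t)`
(one block per internal vertex `v`, consisting of the sectors owned by `v`) of `φ` applied to
the ordered product of the corresponding letters of `w`. -/
noncomputable def phiPi {A : Type*} [Ring A] (φ : A → ℂ) (t : PTree) (w : List A) : ℂ :=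
  ∏ᶠ v ∈ {v : List ℕ | IsInternalAt t v},
    φ ((((List.range w.length).filter fun i => OwnsSector t v i).map fun i => w.getD i 0).prod)

/-- A corolla: a root whose (at least two) children are all leaves. -/
def corolla (m : ℕ) : PTree := node (List.replicate m leaf)

/-- `t` is a corolla. -/
def IsCorolla (t : PTree) : Prop := ∃ m, 2 ≤ m ∧ t = corolla m

/-- Graft a tree `s` onto the leftmost leaf of `t`. -/
def graftLeftmost : PTree → PTree → PTree
  | node [], s => s
  | node (c :: cs), s => node (graftLeftmost c s :: cs)

/-- Trees obtained from the single-vertex tree by repeatedly grafting a corolla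
onto the leftmost leaf. -/
inductive IsBST : PTree → Prop
  | single : IsBST leaf
  | graft (t : PTree) (m : ℕ) : IsBST t → 2 ≤ m → IsBST (graftLeftmost t (corolla m))

/-- Schröder trees whose leftmost child of the root is a leaf. -/
def IsPST (t : PTree) : Prop := ∃ cs, t = node (leaf :: cs)

end PTree
namespace PTree

mutual
  /-- List of all vertex paths of a tree. -/
  def verticesList : PTree → List (List ℕ)
    | .node cs => [] :: verticesListAux 0 cs
  def verticesListAux : ℕ → List PTree → List (List ℕ)
    | _, [] => []
    | i, c :: cs => (verticesList c).map (i :: ·) ++ verticesListAux (i + 1) cs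
end

open Classical in
/-- The `Finset` of internal vertices of `t`. -/
noncomputable def internalFinset (t : PTree) : Finset (List ℕ) :=
  ((verticesList t).filter fun p => decide (IsInternalAt t p)).toFinset

open Classical in
/-- The admissible cuts of a Schröder tree `t`: sets of internal vertices such that every
path from the root to a leaf contains at most one of them (equivalently, antichains for
the ancestor/prefix order). -/
noncomputable def cutsFinset (t : PTree) : Finset (Finset (List ℕ)) :=
  (internalFinset t).powerset.filter fun c => ∀ v ∈ c, ∀ w ∈ c, v ≠ w → ¬ v <+: w

/-- A vertex path lies on the leftmost branch iff it consists of zeros. -/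
def OnLeftBranch (v : List ℕ) : Prop := v = List.replicate v.length 0

open Classical in
/-- `Adm_≺(t)`: admissible cuts whose trunk contains the leftmost leaf of `t`,
i.e. cuts containing no vertex of the leftmost branch. -/
noncomputable def cutsPrecFinset (t : PTree) : Finset (Finset (List ℕ)) :=
  (cutsFinset t).filter fun c => ∀ v ∈ c, ¬ OnLeftBranch v

open Classical in
/-- `Adm(t) \ Adm_≺(t)`: the admissible cuts containing a vertex of the leftmost branch. -/
noncomputable def cutsSuccFinset (t : PTree) : Finset (Finset (List ℕ)) :=
  (cutsFinset t).filter fun c => ∃ v ∈ c, OnLeftBranch v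

/-- Replace the subtree at a given path by a leaf. -/
def replaceLeaf : List ℕ → PTree → PTree
  | [], _ => leaf
  | i :: p, node cs => node (cs.set i (replaceLeaf p (cs.getD i leaf)))

/-- The vertices of a cut, sorted from left to right. -/
noncomputable def sortCut (t : PTree) (c : Finset (List ℕ)) : List (List ℕ) :=
  c.toList.mergeSort fun v w => Nat.ble (leavesBefore t v) (leavesBefore t w)

/-- The trunk `R_c(t)`: replace the subtree at each vertex of the cut by a leaf. -/
noncomputable def trunkTree (t : PTree) (c : Finset (List ℕ)) : PTree :=
  (sortCut t c).foldl (fun s v => replaceLeaf v s) t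

open Classical in
/-- Sector `i` of `t` is removed by the cut `c` (it lies in one of the pruned subtrees). -/
noncomputable def RemovedIdx (t : PTree) (c : Finset (List ℕ)) (i : ℕ) : Prop :=
  ∃ v ∈ c, leavesBefore t v ≤ i ∧ i < leavesBefore t v + numSectors (subtree! t v)

/-- A decorated forest: a list of Schröder trees, each `t` decorated by a word of length
`numSectors t` labelling the sectors between consecutive leaves from left to right. -/
abbrev DForest (A : Type*) := List (PTree × List A)

/-- A genuine decorated tree: a non-unit Schröder tree with matching decoration. -/
def GoodTree {A : Type*} (d : PTree × List A) : Prop :=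
  IsSchroder d.1 ∧ d.1 ≠ leaf ∧ d.2.length = numSectors d.1

/-- A genuine decorated forest. -/
def GoodForest {A : Type*} (F : DForest A) : Prop := ∀ d ∈ F, GoodTree d

open Classical in
/-- The decoration of the trunk `R_c(t ⊗ w)`: the letters of `w` at the sectors
not removed by the cut, in their original order. -/
noncomputable def trunkWord {A : Type*} [Zero A] (t : PTree) (c : Finset (List ℕ))
    (w : List A) : List A :=
  (((List.range w.length).filter fun i => decide (¬ RemovedIdx t c i)).map fun i => w.getD i 0)

open Classical in
/-- The trunk `R_c(t ⊗ w)` as a decorated forest (empty if the trunk is the unit,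
i.e. the single-leaf tree, which is identified with `1`). -/
noncomputable def trunkPart {A : Type*} [Zero A] (d : PTree × List A)
    (c : Finset (List ℕ)) : DForest A :=
  if trunkTree d.1 c = leaf then [] else [(trunkTree d.1 c, trunkWord d.1 c d.2)]

/-- The pruning `P_c(t ⊗ w)`: the ordered forest of decorated subtrees rooted at the
vertices of the cut (left to right), each carrying the contiguous subword of `w`
decorating its sectors. -/
noncomputable def prunePart {A : Type*} (d : PTree × List A)
    (c : Finset (List ℕ)) : DForest A :=
  (sortCut d.1 c).map fun v =>
    (subtree! d.1 v, (d.2.drop (leavesBefore d.1 v)).take (numSectors (subtree! d.1 v)))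

/-- All splittings `R_c(F) ⊗ P_c(F)` of a decorated forest given by tuples of admissible
cuts (one cut per tree): the combinatorial coproduct `δ_A`. -/
noncomputable def forestSplits {A : Type*} [Zero A] :
    DForest A → List (DForest A × DForest A)
  | [] => [([], [])]
  | d :: ds => (cutsFinset d.1).toList.flatMap fun c =>
      (forestSplits ds).map fun pr => (trunkPart d c ++ pr.1, prunePart d c ++ pr.2)

/-- The splittings appearing in `δ_{≺,A}`: the first tree is cut along `Adm_≺`, the
remaining ones along all admissible cuts. -/
noncomputable def forestSplitsPrec {A : Type*} [Zero A] :
    DForest A → List (DForest A × DForest A)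
  | [] => []
  | d :: ds => (cutsPrecFinset d.1).toList.flatMap fun c =>
      (forestSplits ds).map fun pr => (trunkPart d c ++ pr.1, prunePart d c ++ pr.2)

/-- The splittings appearing in `δ_{≻,A} = δ_A − δ_{≺,A}`. -/
noncomputable def forestSplitsSucc {A : Type*} [Zero A] :
    DForest A → List (DForest A × DForest A)
  | [] => []
  | d :: ds => (cutsSuccFinset d.1).toList.flatMap fun c =>
      (forestSplits ds).map fun pr => (trunkPart d c ++ pr.1, prunePart d c ++ pr.2)

/-- The convolution product `f * g = m_ℂ ∘ (f ⊗ g) ∘ δ_A` of linear functionals on the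
Hopf algebra `H_S(A)` of decorated Schröder trees (described on the basis of decorated
forests). -/
noncomputable def convD {A : Type*} [Zero A] (f g : DForest A → ℂ) : DForest A → ℂ :=
  fun F => ((forestSplits F).map fun pr => f pr.1 * g pr.2).sum

/-- The left half-shuffle product `f ≺̃ g = m_ℂ ∘ (f ⊗ g) ∘ δ_{≺,A}`. -/
noncomputable def precD {A : Type*} [Zero A] (f g : DForest A → ℂ) : DForest A → ℂ :=
  fun F => ((forestSplitsPrec F).map fun pr => f pr.1 * g pr.2).sum

/-- The right half-shuffle product `f ≻̃ g = m_ℂ ∘ (f ⊗ g) ∘ δ_{≻,A}`. -/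
noncomputable def succD {A : Type*} [Zero A] (f g : DForest A → ℂ) : DForest A → ℂ :=
  fun F => ((forestSplitsSucc F).map fun pr => f pr.1 * g pr.2).sum

open Classical in
/-- The counit `ε_A` of `H_S(A)` as a functional. -/
noncomputable def epsD {A : Type*} : DForest A → ℂ := fun F => if F = [] then 1 else 0

open Classical in
/-- The character `Φ̃ : H_S(A) → ℂ` extending `φ`: it sends a decorated tree `t ⊗ w` to
`φ(a_1 ⋯ a_n)` if `t` is a corolla and to `0` otherwise, multiplicatively on forests. -/
noncomputable def charD {A : Type*} [Ring A] (φ : A → ℂ) : DForest A → ℂ :=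
  fun F => (F.map fun d => if IsCorolla d.1 then φ d.2.prod else 0).prod

/-- `Φ̂ = Φ̃ − ε_A`. -/
noncomputable def charHatD {A : Type*} [Ring A] (φ : A → ℂ) : DForest A → ℂ :=
  fun F => charD φ F - epsD F

/-- Convolution powers `f^{*k}` (with `f^{*0} = ε_A`). -/
noncomputable def convPowD {A : Type*} [Zero A] (f : DForest A → ℂ) : ℕ → DForest A → ℂ
  | 0 => epsD
  | k + 1 => convD f (convPowD f k)

/-- Left half-shuffle powers `α^{≺̃ k}`, with `α^{≺̃ 0} = ε_A` and
`α^{≺̃ k} = α ≺̃ α^{≺̃ (k−1)}`. -/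
noncomputable def precPowD {A : Type*} [Zero A] (α : DForest A → ℂ) : ℕ → DForest A → ℂ
  | 0 => epsD
  | k + 1 => precD α (precPowD α k)

/-- Right half-shuffle powers `α^{≻̃ k}`, with `α^{≻̃ 0} = ε_A` and
`α^{≻̃ k} = α^{≻̃ (k−1)} ≻̃ α`. -/
noncomputable def succPowD {A : Type*} [Zero A] (α : DForest A → ℂ) : ℕ → DForest A → ℂ
  | 0 => epsD
  | k + 1 => succD (succPowD α k) α

/-- The left half-shuffle exponential `E_≺̃(α) = Σ_{k ≥ 0} α^{≺̃ k}`. -/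
noncomputable def ePrecD {A : Type*} [Zero A] (α : DForest A → ℂ) : DForest A → ℂ :=
  fun F => ∑ᶠ k : ℕ, precPowD α k F

/-- The right half-shuffle exponential `E_≻̃(α) = Σ_{k ≥ 0} α^{≻̃ k}`. -/
noncomputable def eSuccD {A : Type*} [Zero A] (α : DForest A → ℂ) : DForest A → ℂ :=
  fun F => ∑ᶠ k : ℕ, succPowD α k F

/-- The convolution exponential `exp^*(α) = Σ_{k ≥ 0} α^{*k} / k!`. -/
noncomputable def expStarD {A : Type*} [Zero A] (α : DForest A → ℂ) : DForest A → ℂ :=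
  fun F => ∑ᶠ k : ℕ, ((k.factorial : ℂ))⁻¹ * convPowD α k F

/-- The convolution logarithm `log^*(Φ̃) = Σ_{k ≥ 1} ((−1)^{k+1}/k) (Φ̃ − ε_A)^{*k}`. -/
noncomputable def logStarD {A : Type*} [Ring A] (φ : A → ℂ) : DForest A → ℂ :=
  fun F => ∑ᶠ k ∈ Set.Ici (1 : ℕ), ((-1 : ℂ) ^ (k + 1) / (k : ℂ)) * convPowD (charHatD φ) k F

/-- An infinitesimal character of `H_S(A)`: it vanishes on the unit (empty forest) and on
products of two or more nonempty forests. -/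
def IsInfCharD {A : Type*} (α : DForest A → ℂ) : Prop :=
  α [] = 0 ∧ ∀ F G : DForest A, F ≠ [] → G ≠ [] → α (F ++ G) = 0

end PTree
section Words

variable {A : Type*}

/-- A word: a nonempty list of elements of `A` (an element `a_1 ⋯ a_n ∈ A^{⊗n}`, `n ≥ 1`). -/
def WordNE (A : Type*) := {l : List A // l ≠ []}

/-- A sentence: a bar product `w_1 | ⋯ | w_m` of words, an element of the basis of the
double tensor algebra `T(T_+(A))`. The empty sentence is the unit `1`. -/
abbrev Sentence (A : Type*) := List (WordNE A)

open Classical in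
/-- Turn a list of lists into a sentence (the lists arising below are always nonempty). -/
noncomputable def mkWords (ls : List (List A)) : Sentence A :=
  (ls.filter fun l => decide (l ≠ [])).attach.map fun x =>
    ⟨x.1, by have h := List.of_mem_filter x.2; simpa using h⟩

/-- Group a list of natural numbers into maximal runs of consecutive integers. -/
def natRuns : List ℕ → List (List ℕ)
  | [] => []
  | x :: xs =>
    match natRuns xs with
    | (y :: ys) :: rest => if x + 1 = y then (x :: y :: ys) :: rest else [x] :: (y :: ys) :: rest
    | _ => [[x]]

open Classical in
/-- The two sides `a_S ⊗ a_{J^S}` of the cut of a word `w` along a subset `S` of its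
letter positions: `a_S` is the subword at the positions of `S` (the unit, i.e. the empty
sentence, if `S = ∅`), and `a_{J^S}` is the bar product of the subwords corresponding to
the maximal intervals of the complement of `S`. -/
noncomputable def wordCut [Zero A] (w : WordNE A) (S : Finset (Fin w.1.length)) :
    Sentence A × Sentence A :=
  (mkWords [(S.sort (· ≤ ·)).map w.1.get],
   mkWords (((natRuns ((((Finset.univ : Finset (Fin w.1.length)) \ S).sort (· ≤ ·)).map
      Fin.val))).map fun r => r.map fun i => w.1.getD i 0))

/-- All terms of the coproduct `Δ` of `T(T_+(A))` on a sentence: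
`Δ(a_1⋯a_n) = Σ_{S ⊆ [n]} a_S ⊗ a_{J^S}`, extended multiplicatively to bar products. -/
noncomputable def sentenceCuts [Zero A] : Sentence A → List (Sentence A × Sentence A)
  | [] => [([], [])]
  | w :: ws => (Finset.univ : Finset (Finset (Fin w.1.length))).toList.flatMap fun S =>
      (sentenceCuts ws).map fun pr => ((wordCut w S).1 ++ pr.1, (wordCut w S).2 ++ pr.2)

open Classical in
/-- The terms of the half-coproduct `Δ_≺` (sum over `S` containing the first letter,
`Δ_≺(w_1|⋯|w_m) = Δ_≺(w_1) | Δ(w_2|⋯|w_m)`). -/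
noncomputable def sentenceCutsPrec [Zero A] : Sentence A → List (Sentence A × Sentence A)
  | [] => []
  | w :: ws => (((Finset.univ : Finset (Finset (Fin w.1.length))).filter
        fun S => ∃ j ∈ S, j.val = 0)).toList.flatMap fun S =>
      (sentenceCuts ws).map fun pr => ((wordCut w S).1 ++ pr.1, (wordCut w S).2 ++ pr.2)

open Classical in
/-- The terms of the half-coproduct `Δ_≻` (sum over `S` not containing the first letter). -/
noncomputable def sentenceCutsSucc [Zero A] : Sentence A → List (Sentence A × Sentence A)
  | [] => []
  | w :: ws => (((Finset.univ : Finset (Finset (Fin w.1.length))).filter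
        fun S => ∀ j ∈ S, j.val ≠ 0)).toList.flatMap fun S =>
      (sentenceCuts ws).map fun pr => ((wordCut w S).1 ++ pr.1, (wordCut w S).2 ++ pr.2)

/-- The convolution product `f * g = m_ℂ ∘ (f ⊗ g) ∘ Δ` on linear functionals of
`T(T_+(A))` (described on the basis of sentences). -/
noncomputable def convW [Zero A] (f g : Sentence A → ℂ) : Sentence A → ℂ :=
  fun s => ((sentenceCuts s).map fun pr => f pr.1 * g pr.2).sum

/-- The left half-shuffle product `f ≺ g = m_ℂ ∘ (f ⊗ g) ∘ Δ_≺`. -/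
noncomputable def precW [Zero A] (f g : Sentence A → ℂ) : Sentence A → ℂ :=
  fun s => ((sentenceCutsPrec s).map fun pr => f pr.1 * g pr.2).sum

/-- The right half-shuffle product `f ≻ g = m_ℂ ∘ (f ⊗ g) ∘ Δ_≻`. -/
noncomputable def succW [Zero A] (f g : Sentence A → ℂ) : Sentence A → ℂ :=
  fun s => ((sentenceCutsSucc s).map fun pr => f pr.1 * g pr.2).sum

open Classical in
/-- The counit `ε` of `T(T_+(A))` as a functional. -/
noncomputable def epsW : Sentence A → ℂ := fun s => if s = [] then 1 else 0

/-- A character of `T(T_+(A))`: a unital multiplicative functional. -/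
def IsCharW (Φ : Sentence A → ℂ) : Prop :=
  Φ [] = 1 ∧ ∀ s t : Sentence A, Φ (s ++ t) = Φ s * Φ t

/-- An infinitesimal character of `T(T_+(A))`: it vanishes on the unit and on bar
products of two or more words. -/
def IsInfCharW (α : Sentence A → ℂ) : Prop :=
  α [] = 0 ∧ ∀ s t : Sentence A, s ≠ [] → t ≠ [] → α (s ++ t) = 0

/-- Convolution powers `f^{*k}` (with `f^{*0} = ε`). -/
noncomputable def convPowW [Zero A] (f : Sentence A → ℂ) : ℕ → Sentence A → ℂ
  | 0 => epsW
  | k + 1 => convW f (convPowW f k)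

/-- Left half-shuffle powers `α^{≺k}`, with `α^{≺0} = ε` and `α^{≺k} = α ≺ α^{≺(k−1)}`. -/
noncomputable def precPowW [Zero A] (α : Sentence A → ℂ) : ℕ → Sentence A → ℂ
  | 0 => epsW
  | k + 1 => precW α (precPowW α k)

/-- Right half-shuffle powers `α^{≻k}`, with `α^{≻0} = ε` and `α^{≻k} = α^{≻(k−1)} ≻ α`. -/
noncomputable def succPowW [Zero A] (α : Sentence A → ℂ) : ℕ → Sentence A → ℂ
  | 0 => epsW
  | k + 1 => succW (succPowW α k) α

/-- The convolution exponential `exp^*(α) = Σ_{k≥0} α^{*k}/k!`. -/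
noncomputable def expStarW [Zero A] (α : Sentence A → ℂ) : Sentence A → ℂ :=
  fun s => ∑ᶠ k : ℕ, ((k.factorial : ℂ))⁻¹ * convPowW α k s

/-- The left half-shuffle exponential `E_≺(α) = Σ_{k≥0} α^{≺k}`. -/
noncomputable def ePrecW [Zero A] (α : Sentence A → ℂ) : Sentence A → ℂ :=
  fun s => ∑ᶠ k : ℕ, precPowW α k s

/-- The right half-shuffle exponential `E_≻(α) = Σ_{k≥0} α^{≻k}`. -/
noncomputable def eSuccW [Zero A] (α : Sentence A → ℂ) : Sentence A → ℂ :=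
  fun s => ∑ᶠ k : ℕ, succPowW α k s

/-- The character `Φ : T(T_+(A)) → ℂ` extending `φ`:
`Φ(w_1|⋯|w_m) = φ(w_1)⋯φ(w_m)` with `φ` applied to the internal product of each word. -/
noncomputable def charW [Monoid A] (φ : A → ℂ) : Sentence A → ℂ :=
  fun s => (s.map fun w => φ w.1.prod).prod

end Words

/-- The composition `ρ̃ ∘ ι` as a functional on `T(T_+(A))`: since
`ι(a_1⋯a_n) = Σ_{t ∈ ST(n)} t ⊗ a_1⋯a_n` (multiplicatively on bar products), its dual sends
a functional `f` on `H_S(A)` to the functional on sentences given by summing `f` over all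
ways of attaching a Schröder tree with `|w_i| + 1` leaves to each word `w_i`. -/
noncomputable def iotaDual {A : Type*} (f : PTree.DForest A → ℂ) : Sentence A → ℂ :=
  fun ws => ∑ᶠ ts ∈ {ts : List PTree |
      List.Forall₂ (fun t (w : WordNE A) =>
        PTree.IsSchroder t ∧ PTree.numLeaves t = w.1.length + 1) ts ws},
    f (ts.zip (ws.map Subtype.val))

/-- Sum of `F s g gs` over all the ways of selecting a subword `s` of `w`, where `g :: gs` are the
(possibly empty) gaps left between the selected letters. -/
def cutSum {B : Type*} : (List B → List B → List (List B) → ℂ) → List B → ℂ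
  | F, [] => F [] [] []
  | F, a :: w => cutSum (fun s g gs => F (a :: s) [] (g :: gs)) w +
      cutSum (fun s g gs => F s (a :: g) gs) w

section CutSum

variable {B C : Type*}

theorem cutSum_add (F G : List B → List B → List (List B) → ℂ) (w : List B) :
    cutSum (fun s g gs => F s g gs + G s g gs) w = cutSum F w + cutSum G w := by
  induction w generalizing F G with
  | nil => rfl
  | cons a w ih => simp only [cutSum, ih]; ring

theorem cutSum_const_mul (c : ℂ) (F : List B → List B → List (List B) → ℂ) (w : List B) :
    cutSum (fun s g gs => c * F s g gs) w = c * cutSum F w := by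
  induction w generalizing F with
  | nil => rfl
  | cons a w ih => simp only [cutSum, ih]; ring

theorem cutSum_map (f : C → B) (F : List B → List B → List (List B) → ℂ) (w : List C) :
    cutSum F (w.map f) =
      cutSum (fun s g gs => F (s.map f) (g.map f) (gs.map (List.map f))) w := by
  induction w generalizing F with
  | nil => rfl
  | cons a w ih => simp only [cutSum, List.map_cons, ih, List.map_nil]

/-- Splitting a selection according to its first selected letter. -/
theorem cutSum_eq_first_gap (F : List B → List B → List (List B) → ℂ) (w : List B) :
    cutSum F w = F [] w [] + ∑ i : Fin w.length,
      cutSum (fun s g gs => F (w[i] :: s) (w.take i) (g :: gs)) (w.drop (i + 1)) := by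
  induction w generalizing F with
  | nil => simp [cutSum]
  | cons a w ih =>
    rw [cutSum, ih (fun s g gs => F s (a :: g) gs)]
    simp only [List.length_cons, Fin.sum_univ_succ]
    simp only [Fin.getElem_fin, Fin.val_zero, List.getElem_cons_zero, List.take_zero,
      Fin.val_succ, List.getElem_cons_succ, List.take_succ_cons, List.drop_succ_cons,
      List.drop_zero]
    ring

/-- The convolution of two functionals on words, the second one being extended
multiplicatively to sequences of words. -/
def wordConv (f g : List B → ℂ) (w : List B) : ℂ :=
  cutSum (fun s l ls => f s * (g l * (ls.map g).prod)) w

theorem wordConv_assoc_aux (g h : List B → ℂ) (w : List B) (G : List B → List B → List B → ℂ) :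
    cutSum (fun s l ls => cutSum (fun s' k ks =>
      G s' k l * (ks.map g).prod * (ls.map h).prod) s) w =
    cutSum (fun s m ms => cutSum (fun k l ls =>
      G s k l * (ls.map h).prod * (ms.map (wordConv g h)).prod) m) w := by
  induction w generalizing G with
  | nil => simp [cutSum]
  | cons a w ih =>
    have e1 := ih (fun s k l => G (a :: s) [] [] * g k * h l)
    have e2 := ih (fun s k l => G s (a :: k) [] * h l)
    have e3 := ih (fun s k l => G s k (a :: l))
    have e4 : ∀ s m ms, cutSum (fun k l ls => G (a :: s) [] [] * g k * h l * (ls.map h).prod *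
        (List.map (wordConv g h) ms).prod) m =
        G (a :: s) [] [] * (wordConv g h m * (List.map (wordConv g h) ms).prod) := fun s m ms => by
      rw [wordConv, mul_comm (cutSum _ _), ← mul_assoc, ← cutSum_const_mul]
      congr! 4
      ring
    simp only [e4] at e1
    simp only [cutSum, List.map_cons, List.prod_cons, cutSum_add,
      List.map_nil, List.prod_nil, mul_one]
    simp only [← mul_assoc] at e1 e2 e3 ⊢
    rw [← e1, ← e3]
    have e5 := e2.symm
    simp only [mul_right_comm _ (h _)] at e5 ⊢
    simp only [mul_right_comm _ (g _)] at e5 ⊢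
    rw [e5]
    ring

theorem wordConv_assoc (f g h : List B → ℂ) (w : List B) :
    wordConv (wordConv f g) h w = wordConv f (wordConv g h) w := by
  have key := wordConv_assoc_aux g h w (fun s k l => f s * g k * h l)
  rw [wordConv, wordConv]
  convert key using 2
  · funext s l ls
    rw [wordConv, mul_comm, ← cutSum_const_mul]
    congr! 4
    ring
  · funext s l ls
    rw [wordConv, mul_comm (cutSum _ _), ← mul_assoc, ← cutSum_const_mul]
    congr! 4
    ring

end CutSum

/-- Sum of `F s c` over all the ways of splitting `w` into a subword `s` and its complement `c`. -/
def splitSum {B : Type*} : (List B → List B → ℂ) → List B → ℂ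
  | F, [] => F [] []
  | F, a :: w => splitSum (fun s c => F (a :: s) c) w + splitSum (fun s c => F s (a :: c)) w

theorem splitSum_map {B C : Type*} (f : C → B) (F : List B → List B → ℂ) (w : List C) :
    splitSum F (w.map f) = splitSum (fun s c => F (s.map f) (c.map f)) w := by
  induction w generalizing F with
  | nil => rfl
  | cons a w ih => simp only [splitSum, List.map_cons, ih]

section Fin

theorem sort_eq_filter_finRange {n : ℕ} (S : Finset (Fin n)) :
    S.sort (· ≤ ·) = (List.finRange n).filter (fun i => decide (i ∈ S)) := by
  refine List.Perm.eq_of_pairwise (le := (· ≤ ·)) (fun a b _ _ => le_antisymm)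
    (Finset.pairwise_sort S _) ((List.pairwise_le_finRange n).filter _) ?_
  refine (List.perm_ext_iff_of_nodup (Finset.sort_nodup S _) ((List.nodup_finRange n).filter _)).2 ?_
  simp

theorem sum_finset_fin_eq_splitSum (n : ℕ) (F : List (Fin n) → List (Fin n) → ℂ) :
    ∑ S : Finset (Fin n), F (S.sort (· ≤ ·)) ((Finset.univ \ S).sort (· ≤ ·)) =
      splitSum F (List.finRange n) := by
  simp only [sort_eq_filter_finRange]
  induction n with
  | zero => simp [splitSum]
  | succ n ih =>
    have hinj : Function.Injective (Fin.succ : Fin n → Fin (n + 1)) := Fin.succ_injective n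
    have e : (Finset.univ : Finset (Finset (Fin (n + 1)))) =
        (insert 0 (Finset.univ.map ⟨Fin.succ, hinj⟩) : Finset (Fin (n + 1))).powerset := by
      rw [← Finset.powerset_univ]
      congr 1
      ext i
      cases i using Fin.cases <;> simp
    rw [e, Finset.sum_powerset_insert (by simp), add_comm, List.finRange_succ, splitSum,
      splitSum_map, splitSum_map, ← ih, ← ih]
    have e2 : (Finset.univ.map ⟨Fin.succ, hinj⟩ : Finset (Fin (n + 1))).powerset =
        (Finset.univ : Finset (Finset (Fin n))).map
          ⟨fun S => S.map ⟨Fin.succ, hinj⟩, Finset.map_injective _⟩ := by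
      ext S
      simp only [Finset.mem_powerset, Finset.mem_map, Finset.mem_univ, true_and,
        Function.Embedding.coeFn_mk, Finset.subset_map_iff]
      simp [eq_comm]
    rw [e2]
    simp only [Finset.sum_map, Function.Embedding.coeFn_mk]
    simp [List.filter_map, Function.comp_def]

end Fin

/-- Adding an index in front of a list of runs of consecutive integers. -/
def consRun (x : ℕ) : List (List ℕ) → List (List ℕ)
  | (y :: ys) :: rest => if x + 1 = y then (x :: y :: ys) :: rest else [x] :: (y :: ys) :: rest
  | _ => [[x]]

theorem natRuns_cons (x : ℕ) (xs : List ℕ) : natRuns (x :: xs) = consRun x (natRuns xs) := by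
  rw [natRuns]
  unfold consRun
  split <;> rfl

theorem cutSum_range'_congr (n : ℕ) (k : ℕ) (F G : List ℕ → List ℕ → List (List ℕ) → ℂ)
    (h : ∀ s g gs, (∀ x ∈ g.head?, x = k) → (∀ x ∈ g, k ≤ x) → (∀ l ∈ gs, ∀ x ∈ l, k < x) →
      F s g gs = G s g gs) :
    cutSum F (List.range' k n) = cutSum G (List.range' k n) := by
  induction n generalizing k F G with
  | zero => exact h _ _ _ (by simp) (by simp) (by simp)
  | succ n ih =>
    rw [List.range'_succ, cutSum, cutSum]
    congr 1
    · refine ih _ _ _ fun s g gs h1 h2 h3 => h _ _ _ (by simp) (by simp) ?_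
      intro l hl x hx
      rcases List.mem_cons.1 hl with rfl | hl
      · exact h2 x hx
      · exact lt_trans (Nat.lt_succ_self k) (h3 l hl x hx)
    · refine ih _ _ _ fun s g gs h1 h2 h3 => h _ _ _ (by simp) ?_ ?_
      · intro x hx
        rcases List.mem_cons.1 hx with rfl | hx
        · exact le_rfl
        · exact (Nat.lt_of_succ_le (h2 x hx)).le
      · exact fun l hl x hx => lt_trans (Nat.lt_succ_self k) (h3 l hl x hx)

/-- Removal of the empty words from a sequence of words. -/
def dropNil {B : Type*} (ls : List (List B)) : List (List B) := ls.filter (fun l => !l.isEmpty)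

theorem splitSum_natRuns (n k : ℕ) (F : List ℕ → List (List ℕ) → ℂ) :
    splitSum (fun s c => F s (natRuns c)) (List.range' k n) =
      cutSum (fun s g gs => F s (dropNil (g :: gs))) (List.range' k n) := by
  induction n generalizing k F with
  | zero => simp [splitSum, cutSum, dropNil, natRuns]
  | succ n ih =>
    rw [List.range'_succ, splitSum, cutSum, ih (k + 1) (fun s => F (k :: s))]
    simp only [natRuns_cons]
    rw [ih (k + 1) (fun s r => F s (consRun k r))]
    congr 1
    refine cutSum_range'_congr _ _ _ _ fun s g gs h1 h2 h3 => ?_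
    congr 1
    rcases g with _ | ⟨y, ys⟩
    · have e : dropNil ([] :: gs) = dropNil gs := by simp [dropNil]
      have e' : dropNil ([k] :: gs) = [k] :: dropNil gs := by simp [dropNil]
      rw [e, e']
      rcases hr : dropNil gs with _ | ⟨l, r⟩
      · rfl
      · have hl : l ∈ dropNil gs := by simp [hr]
        rcases l with _ | ⟨y, ys⟩
        · simp [dropNil] at hl
        · have := h3 (y :: ys) (List.mem_of_mem_filter hl) y (by simp)
          rw [consRun, if_neg (by omega)]
    · have := h1 y (by simp)
      subst this
      simp [dropNil, consRun]

section Sentences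

variable {A : Type*}

/-- The letters of a word. -/
def WordNE.letters (w : WordNE A) : List A := w.1

theorem WordNE.letters_injective : Function.Injective (WordNE.letters : WordNE A → List A) :=
  fun _ _ h => Subtype.ext h

theorem mkWords_map_letters (ls : List (List A)) :
    (mkWords ls).map WordNE.letters = dropNil ls := by
  refine List.map_map.trans ?_
  have e : (ls.filter fun l => decide (l ≠ [])).attach.map Subtype.val = _ :=
    List.attach_map_subtype_val _
  refine Eq.trans e ?_
  rw [dropNil]
  congr 1
  funext l
  cases l <;> simp

theorem mkWords_eq_of_map_letters {ls : List (List A)} {s : Sentence A}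
    (h : s.map WordNE.letters = dropNil ls) : mkWords ls = s :=
  List.map_injective_iff.2 WordNE.letters_injective ((mkWords_map_letters ls).trans h.symm)

theorem mkWords_dropNil (ls : List (List A)) : mkWords (dropNil ls) = mkWords ls :=
  mkWords_eq_of_map_letters (by rw [mkWords_map_letters]; simp [dropNil])

/-- The functional on words underlying a functional on sentences. -/
noncomputable def onWord (f : Sentence A → ℂ) (l : List A) : ℂ := f (mkWords [l])

theorem onWord_nil (f : Sentence A → ℂ) : onWord f [] = f [] := by
  rw [onWord, mkWords_eq_of_map_letters (s := [])]
  rfl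

theorem onWord_val (f : Sentence A → ℂ) (w : WordNE A) : onWord f w.1 = f [w] := by
  rw [onWord, mkWords_eq_of_map_letters (s := [w])]
  simp [dropNil, WordNE.letters, w.2]

theorem IsCharW.apply_eq {f : Sentence A → ℂ} (hf : IsCharW f) (s : Sentence A) :
    f s = (s.map fun w => onWord f w.1).prod := by
  induction s with
  | nil => simpa using hf.1
  | cons w s ih =>
    rw [List.map_cons, List.prod_cons, ← ih, onWord_val, ← hf.2]
    rfl

theorem IsCharW.mkWords {f : Sentence A → ℂ} (hf : IsCharW f) (ls : List (List A)) :
    f (mkWords ls) = (ls.map (onWord f)).prod := by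
  rw [hf.apply_eq, show (fun w : WordNE A => onWord f w.1) = onWord f ∘ WordNE.letters from rfl,
    ← List.map_map, mkWords_map_letters]
  induction ls with
  | nil => rfl
  | cons l ls ih =>
    rcases l with _ | ⟨a, l⟩
    · simpa [dropNil, onWord_nil, hf.1] using ih
    · simpa [dropNil] using Or.inl ih

theorem IsCharW.ext {f g : Sentence A → ℂ} (hf : IsCharW f) (hg : IsCharW g)
    (h : onWord f = onWord g) : f = g := by
  funext s
  rw [hf.apply_eq, hg.apply_eq, h]

theorem sum_wordCut [Zero A] (w : WordNE A) (F : Sentence A → Sentence A → ℂ) :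
    ∑ S : Finset (Fin w.1.length), F (wordCut w S).1 (wordCut w S).2 =
      cutSum (fun s g gs => F (mkWords [s]) (mkWords (g :: gs))) w.1 := by
  have e1 := sum_finset_fin_eq_splitSum w.1.length (fun s c =>
    F (mkWords [s.map w.1.get])
      (mkWords ((natRuns (c.map Fin.val)).map fun r => r.map fun i => w.1.getD i 0)))
  have e2 : splitSum (fun s c =>
      F (mkWords [s.map w.1.get])
        (mkWords ((natRuns (c.map Fin.val)).map fun r => r.map fun i => w.1.getD i 0)))
      (List.finRange w.1.length) = splitSum (fun s c =>
      F (mkWords [s.map fun i => w.1.getD i 0])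
        (mkWords ((natRuns c).map fun r => r.map fun i => w.1.getD i 0)))
      ((List.finRange w.1.length).map Fin.val) := by
    rw [splitSum_map]
    congr 1
    funext s c
    rw [List.map_map]
    congr! 3
    refine List.map_congr_left fun i _ => ?_
    simp
  have e3 : (List.finRange w.1.length).map Fin.val = List.range' 0 w.1.length := by
    rw [← List.range_eq_range']
    simp
  have e4 : (List.range' 0 w.1.length).map (fun i => w.1.getD i 0) = w.1 := by
    rw [← List.range_eq_range']
    apply List.ext_getElem <;> simp +contextual
  have e5 := splitSum_natRuns w.1.length 0 (fun s r => F (mkWords [s.map fun i => w.1.getD i 0])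
        (mkWords (r.map fun r => r.map fun i => w.1.getD i 0)))
  rw [e3] at e2
  refine e1.trans (e2.trans (e5.trans ?_))
  conv_rhs => rw [← e4, cutSum_map]
  congr! 5
  rw [← mkWords_dropNil (List.map _ _ :: _)]
  congr 1
  simp [dropNil, List.filter_map, Function.comp_def, List.filter_cons]
  split <;> simp_all

theorem convW_cons [Zero A] {f g : Sentence A → ℂ} (hf : IsCharW f) (hg : IsCharW g)
    (w : WordNE A) (s : Sentence A) :
    convW f g (w :: s) = wordConv (onWord f) (onWord g) w.1 * convW f g s := by
  have key : wordConv (onWord f) (onWord g) w.1 =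
      ∑ S : Finset (Fin w.1.length), f (wordCut w S).1 * g (wordCut w S).2 := by
    rw [sum_wordCut w (fun a b => f a * g b), wordConv]
    congr 1
    funext s g gs
    rw [hf.mkWords, hg.mkWords]
    simp
  rw [key, convW, sentenceCuts, List.map_flatMap, List.flatMap, List.sum_flatten, List.map_map,
    convW, Finset.sum_mul, ← Finset.sum_map_toList]
  congr! 3
  rename_i S
  simp only [Function.comp_def, List.map_map, hf.2, hg.2, ← List.sum_map_mul_left]
  congr! 3
  ring

theorem isCharW_convW [Zero A] {f g : Sentence A → ℂ} (hf : IsCharW f) (hg : IsCharW g) :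
    IsCharW (convW f g) := by
  have h0 : convW f g [] = 1 := by simp [convW, sentenceCuts, hf.1, hg.1]
  refine ⟨h0, fun s t => ?_⟩
  induction s with
  | nil => simp [h0]
  | cons w s ih => rw [List.cons_append, convW_cons hf hg, convW_cons hf hg, ih, mul_assoc]

theorem onWord_convW [Zero A] {f g : Sentence A → ℂ} (hf : IsCharW f) (hg : IsCharW g) :
    onWord (convW f g) = wordConv (onWord f) (onWord g) := by
  funext l
  by_cases hl : l = []
  · subst hl
    simp [onWord_nil, (isCharW_convW hf hg).1, wordConv, cutSum, hf.1, hg.1]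
  · obtain ⟨w, rfl⟩ : ∃ w : WordNE A, w.1 = l := ⟨⟨l, hl⟩, rfl⟩
    rw [onWord_val, convW_cons hf hg, (isCharW_convW hf hg).1, mul_one]

end Sentences

section PolynomialSequences

open Polynomial

theorem exists_polynomial_of_sub {u : ℕ → ℂ} {Q : ℂ[X]} (h : ∀ k : ℕ, u (k + 1) = u k + Q.eval (k : ℂ)) :
    ∃ P : ℂ[X], ∀ k : ℕ, u k = P.eval (k : ℂ) := by
  have key : ∀ Q : ℂ[X], ∃ P : ℂ[X], ∀ n : ℕ, ∑ k ∈ Finset.range n, Q.eval (k : ℂ) = P.eval (n : ℂ) := by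
    intro Q
    induction Q using Polynomial.induction_on' with
    | add p q hp hq =>
      obtain ⟨P, hP⟩ := hp
      obtain ⟨P', hP'⟩ := hq
      exact ⟨P + P', fun n => by simp [Finset.sum_add_distrib, hP, hP']⟩
    | monomial m a =>
      refine ⟨C a * ∑ i ∈ Finset.range (m + 1),
        C ((bernoulli i : ℂ) * ((m + 1).choose i) / (m + 1)) * X ^ (m + 1 - i), fun n => ?_⟩
      have e := congrArg (fun q : ℚ => (q : ℂ)) (sum_range_pow n m)
      push_cast at e
      simp only [eval_monomial, ← Finset.mul_sum, e, eval_mul, eval_C, eval_finsetSum, eval_pow,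
        eval_X]
      congr 1
      exact Finset.sum_congr rfl fun i _ => by ring
  obtain ⟨P, hP⟩ := key Q
  refine ⟨C (u 0) + P, fun k => ?_⟩
  rw [eval_add, eval_C, ← hP]
  induction k with
  | zero => simp
  | succ k ih => rw [h, ih, Finset.sum_range_succ, add_assoc]

theorem polynomial_eq_of_eval_nat {P Q : ℂ[X]} (h : ∀ k : ℕ, P.eval (k : ℂ) = Q.eval (k : ℂ)) :
    P = Q :=
  Polynomial.eq_of_infinite_eval_eq P Q
    ((Set.infinite_range_of_injective Nat.cast_injective).mono
      (by rintro _ ⟨k, rfl⟩; exact h k))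

theorem derivative_descPochhammer_eval_zero (j : ℕ) :
    (derivative (descPochhammer ℂ (j + 1))).eval 0 = (-1) ^ j * (j.factorial : ℂ) := by
  induction j with
  | zero => simp
  | succ j ih =>
    rw [descPochhammer_succ_right, derivative_mul, eval_add, eval_mul, ih, eval_mul,
      descPochhammer_ne_zero_eval_zero ℂ (Nat.succ_ne_zero j), Nat.factorial_succ]
    simp
    ring

/-- If a polynomial sequence has binomial coordinates `v`, its derivative at `0` is given by the
logarithmic series in `v`, which is a finite sum. -/
theorem logSeries_eq_derivative {v : ℕ → ℂ} {P : ℂ[X]}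
    (h : ∀ k : ℕ, P.eval (k : ℂ) = ∑ j ∈ Finset.range (k + 1), (k.choose j : ℂ) * v j) :
    ∑ᶠ k ∈ Set.Ici (1 : ℕ), ((-1 : ℂ) ^ (k + 1) / (k : ℂ)) * v k = (derivative P).eval 0 := by
  set N := P.natDegree + 1 with hN
  have hv : ∀ j, v j = (fwdDiff (1 : ℂ))^[j] P.eval 0 := by
    intro j
    induction j using Nat.strong_induction_on with
    | _ j ih =>
      have h1 := h j
      have h2 := shift_eq_sum_fwdDiff_iter (1 : ℂ) P.eval j 0
      simp only [nsmul_eq_mul, mul_one, zero_add] at h2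
      rw [h2, Finset.sum_range_succ, Finset.sum_range_succ, Finset.sum_congr rfl
        fun i hi => by rw [← ih i (Finset.mem_range.1 hi)]] at h1
      simpa using (add_left_cancel h1).symm
  have hv0 : ∀ j, N ≤ j → v j = 0 := fun j hj => by
    rw [hv, fwdDiff_iter_eq_zero_of_degree_lt (by omega)]
    rfl
  have hP : P = ∑ j ∈ Finset.range N, C (v j / (j.factorial : ℂ)) * descPochhammer ℂ j := by
    refine polynomial_eq_of_eval_nat fun k => ?_
    rw [h, eval_finsetSum]
    have e : ∀ j, eval (k : ℂ) (C (v j / (j.factorial : ℂ)) * descPochhammer ℂ j) =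
        (k.choose j : ℂ) * v j := fun j => by
      rw [eval_mul, eval_C, Nat.cast_choose_eq_descPochhammer_div]
      ring
    simp only [e]
    have e1 : ∑ j ∈ Finset.range (k + 1), (k.choose j : ℂ) * v j =
        ∑ j ∈ Finset.range (k + 1 + N), (k.choose j : ℂ) * v j := by
      refine Finset.sum_subset (fun j hj => by simp at hj ⊢; omega) fun j _ hj => ?_
      rw [Nat.choose_eq_zero_of_lt (by simpa using hj)]
      simp
    have e2 : ∑ j ∈ Finset.range N, (k.choose j : ℂ) * v j =
        ∑ j ∈ Finset.range (k + 1 + N), (k.choose j : ℂ) * v j := by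
      refine Finset.sum_subset (fun j hj => by simp at hj ⊢; omega) fun j _ hj => ?_
      rw [hv0 j (by simpa using hj)]
      simp
    rw [e1, e2]
  rw [finsum_mem_eq_sum_of_inter_support_eq (t := (Finset.range N).filter (1 ≤ ·))]
  · rw [hP]
    simp only [derivative_sum, eval_finsetSum, derivative_C_mul, eval_mul, eval_C]
    rw [Finset.sum_filter]
    refine Finset.sum_congr rfl fun j _ => ?_
    rcases j with _ | j
    · simp
    · rw [derivative_descPochhammer_eval_zero, if_pos (by omega), Nat.factorial_succ]
      have h1 : ((j : ℂ) + 1) ≠ 0 := Nat.cast_add_one_ne_zero j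
      have h2 : (j.factorial : ℂ) ≠ 0 := Nat.cast_ne_zero.2 j.factorial_ne_zero
      push_cast
      field_simp
      ring
  · ext j
    simp only [Set.mem_inter_iff, Set.mem_Ici, Function.mem_support, Finset.coe_filter,
      Finset.mem_range, Set.mem_ofPred_eq]
    constructor
    · rintro ⟨h1, h2⟩
      refine ⟨⟨?_, h1⟩, h2⟩
      by_contra hj
      exact h2 (by rw [hv0 j (by omega), mul_zero])
    · rintro ⟨⟨_, h1⟩, h2⟩
      exact ⟨h1, h2⟩

end PolynomialSequences

section CharacterLog

open Polynomial

variable {A : Type*}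

theorem isCharW_epsW : IsCharW (epsW : Sentence A → ℂ) := by
  refine ⟨by simp [epsW], fun s t => ?_⟩
  by_cases hs : s = [] <;> simp [epsW, hs]

theorem isCharW_charW [Monoid A] (φ : A → ℂ) : IsCharW (charW φ) :=
  ⟨by simp [charW], fun s t => by simp [charW]⟩

theorem cutSum_zero {B : Type*} (w : List B) : cutSum (fun _ _ _ => 0) w = 0 := by
  simpa using cutSum_const_mul 0 (fun _ _ _ => 0) w

theorem wordConv_eps {f g : List A → ℂ} (h0 : f [] = 1) (h : ∀ w, w ≠ [] → f w = 0) (w : List A) :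
    wordConv f g w = g w := by
  rw [wordConv, cutSum_eq_first_gap]
  simp [h0, h, cutSum_zero]

theorem onWord_epsW_of_ne_nil {w : List A} (hw : w ≠ []) : onWord epsW w = 0 := by
  obtain ⟨w, rfl⟩ : ∃ v : WordNE A, v.1 = w := ⟨⟨w, hw⟩, rfl⟩
  rw [onWord_val]
  simp [epsW]

theorem wordConv_eps_right {g : List A → ℂ} (h0 : g [] = 1) (h : ∀ w, w ≠ [] → g w = 0)
    (f : List A → ℂ) (w : List A) : wordConv f g w = f w := by
  induction w generalizing f with
  | nil => simp [wordConv, cutSum, h0]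
  | cons a w ih =>
    have e := ih (fun s => f (a :: s))
    rw [wordConv] at e ⊢
    simp [cutSum, h0, h, cutSum_zero, e]

theorem iterate_derivative_listSum (m : ℕ) (L : List ℂ[X]) :
    derivative^[m] L.sum = (L.map derivative^[m]).sum := by
  induction L with
  | nil => simp
  | cons p L ih => simp [iterate_map_add, ih]

variable [Zero A]

theorem isCharW_convPowW {f : Sentence A → ℂ} (hf : IsCharW f) (k : ℕ) :
    IsCharW (convPowW f k) := by
  induction k with
  | zero => exact isCharW_epsW
  | succ k ih => exact isCharW_convW hf ih

theorem convPowW_add {f : Sentence A → ℂ} (hf : IsCharW f) (a b : ℕ) :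
    convPowW f (a + b) = convW (convPowW f a) (convPowW f b) := by
  induction a with
  | zero =>
    refine IsCharW.ext (isCharW_convPowW hf _) (isCharW_convW isCharW_epsW (isCharW_convPowW hf _)) ?_
    funext w
    rw [zero_add, convPowW, onWord_convW isCharW_epsW (isCharW_convPowW hf _), wordConv_eps]
    · rw [onWord_nil, isCharW_epsW.1]
    · exact fun w hw => onWord_epsW_of_ne_nil hw
  | succ a ih =>
    have ha := isCharW_convPowW hf a
    have hb := isCharW_convPowW hf b
    rw [Nat.succ_add, convPowW, ih, convPowW]
    refine IsCharW.ext (isCharW_convW hf (isCharW_convW ha hb))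
      (isCharW_convW (isCharW_convW hf ha) hb) ?_
    rw [onWord_convW hf (isCharW_convW ha hb), onWord_convW ha hb,
      onWord_convW (isCharW_convW hf ha) hb, onWord_convW hf ha]
    funext w
    rw [wordConv_assoc]

theorem isInfCharW_of_derivative {f ρ : Sentence A → ℂ} (hf : IsCharW f) {P : Sentence A → ℂ[X]}
    (hP : ∀ s (k : ℕ), convPowW f k s = (P s).eval (k : ℂ))
    (hρ : ∀ s, ρ s = (derivative (P s)).eval 0) : IsInfCharW ρ := by
  have hmul : ∀ s t, P (s ++ t) = P s * P t := fun s t => polynomial_eq_of_eval_nat fun k => by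
    rw [eval_mul, ← hP, ← hP, ← hP, (isCharW_convPowW hf k).2]
  have h1 : P [] = 1 := polynomial_eq_of_eval_nat fun k => by
    rw [← hP, (isCharW_convPowW hf k).1, eval_one]
  have h0 : ∀ s, s ≠ [] → (P s).eval 0 = 0 := fun s hs => by
    have := hP s 0
    rw [Nat.cast_zero] at this
    rw [← this, convPowW, epsW, if_neg hs]
  refine ⟨by simp [hρ, h1], fun s t hs ht => ?_⟩
  rw [hρ, hmul, derivative_mul, eval_add, eval_mul, eval_mul, h0 s hs, h0 t ht]
  simp

theorem expStarW_of_derivative {f ρ : Sentence A → ℂ} (hf : IsCharW f) {P : Sentence A → ℂ[X]}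
    (hP : ∀ s (k : ℕ), convPowW f k s = (P s).eval (k : ℂ))
    (hρ : ∀ s, ρ s = (derivative (P s)).eval 0) : f = expStarW ρ := by
  have hflow : ∀ s, derivative (P s) =
      ((sentenceCuts s).map fun pr => C (ρ pr.1) * P pr.2).sum := by
    intro s
    refine polynomial_eq_of_eval_nat fun b => ?_
    have e : (P s).comp (X + C (b : ℂ)) =
        ((sentenceCuts s).map fun pr => P pr.1 * C ((P pr.2).eval (b : ℂ))).sum := by
      refine polynomial_eq_of_eval_nat fun a => ?_
      rw [eval_comp, eval_add, eval_X, eval_C, ← Nat.cast_add, ← hP, convPowW_add hf, convW,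
        ← coe_evalRingHom, map_list_sum, List.map_map]
      simp only [Function.comp_def, coe_evalRingHom, eval_mul, eval_C, hP]
    have e' := congrArg (fun p => (derivative p).eval 0) e
    simp only [derivative_comp, derivative_add, derivative_X, derivative_C, add_zero, one_mul,
      eval_comp, eval_add, eval_X, eval_C, zero_add, map_list_sum,
      List.map_map] at e'
    rw [e', ← coe_evalRingHom, ← coe_evalRingHom, map_list_sum, map_list_sum, List.map_map,
      List.map_map]
    simp [Function.comp_def, hρ]
  have hpow : ∀ (m : ℕ) s, convPowW ρ m s = (derivative^[m] (P s)).eval 0 := by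
    intro m
    induction m with
    | zero =>
      intro s
      have := hP s 0
      rwa [Nat.cast_zero] at this
    | succ m ih =>
      intro s
      rw [Function.iterate_succ_apply, hflow, convPowW, convW, ← coe_evalRingHom,
        iterate_derivative_listSum, map_list_sum, List.map_map, List.map_map]
      simp [Function.comp_def, ih]
  funext s
  have h1 : f s = (P s).eval 1 := by
    have := hP s 1
    rw [Nat.cast_one] at this
    rw [← this]
    refine congrFun (IsCharW.ext hf (isCharW_convPowW hf 1) ?_) s
    rw [convPowW, onWord_convW hf (isCharW_convPowW hf 0)]
    funext w
    refine (wordConv_eps_right ?_ (fun w hw => onWord_epsW_of_ne_nil hw) _ w).symm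
    exact (onWord_nil _).trans isCharW_epsW.1
  have h2 : ∀ m : ℕ, ((m.factorial : ℂ))⁻¹ * (derivative^[m] (P s)).eval 0 = (P s).coeff m := by
    intro m
    rw [← coeff_zero_eq_eval_zero, coeff_iterate_derivative, zero_add, Nat.descFactorial_self,
      nsmul_eq_mul, inv_mul_cancel_left₀ (Nat.cast_ne_zero.2 m.factorial_ne_zero)]
  rw [h1, expStarW]
  simp only [hpow, h2]
  rw [finsum_eq_sum_of_support_subset (s := (P s).support) _ (fun m hm => by simpa using hm),
    eval_eq_sum, Polynomial.sum]
  simp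

end CharacterLog

namespace PTree

theorem induction_children {P : PTree → Prop}
    (h : ∀ cs, (∀ c ∈ cs, P c) → P (node cs)) : ∀ t, P t
  | node cs => h cs fun c _ => induction_children h c
termination_by t => t

theorem subtreeAt_nil (t : PTree) : subtreeAt [] t = some t := by
  cases t; rfl

theorem subtreeAt_cons (i : ℕ) (p : List ℕ) (cs : List PTree) :
    subtreeAt (i :: p) (node cs) = (cs[i]?).bind (subtreeAt p) := rfl

theorem isLeafAt_nil {t : PTree} : IsLeafAt t [] ↔ t = leaf := by
  simp [IsLeafAt, subtreeAt_nil]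

theorem isLeafAt_cons {cs : List PTree} {i : ℕ} {p : List ℕ} :
    IsLeafAt (node cs) (i :: p) ↔ ∃ h : i < cs.length, IsLeafAt cs[i] p := by
  rw [IsLeafAt, subtreeAt_cons]
  by_cases h : i < cs.length
  · simp [h, IsLeafAt]
  · simp [h]

/-- The leaves of `node cs` lying in the first `i` children. -/
def leavesInFirst (cs : List PTree) (i : ℕ) : Set (List ℕ) :=
  {p | ∃ j q, p = j :: q ∧ j < i ∧ IsLeafAt (node cs) p}

theorem leavesInFirst_succ {cs : List PTree} {i : ℕ} (hi : i < cs.length) :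
    leavesInFirst cs (i + 1) =
      leavesInFirst cs i ∪ (List.cons i) '' {p | IsLeafAt cs[i] p} := by
  ext p
  constructor
  · rintro ⟨j, q, rfl, hj, hp⟩
    rcases Nat.lt_succ_iff_lt_or_eq.1 hj with hj | rfl
    · exact Or.inl ⟨j, q, rfl, hj, hp⟩
    · exact Or.inr ⟨q, (isLeafAt_cons.1 hp).2, rfl⟩
  · rintro (⟨j, q, rfl, hj, hp⟩ | ⟨q, hq, rfl⟩)
    · exact ⟨j, q, rfl, hj.trans (Nat.lt_succ_self i), hp⟩
    · exact ⟨i, q, rfl, Nat.lt_succ_self i, isLeafAt_cons.2 ⟨hi, hq⟩⟩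

theorem leavesInFirst_zero (cs : List PTree) : leavesInFirst cs 0 = ∅ := by
  ext p
  simp [leavesInFirst]

theorem setOf_isLeafAt_node {cs : List PTree} (hcs : cs ≠ []) :
    {p | IsLeafAt (node cs) p} = leavesInFirst cs cs.length := by
  ext p
  constructor
  · intro hp
    rcases p with _ | ⟨j, q⟩
    · have := isLeafAt_nil.1 hp
      simp_all
    · exact ⟨j, q, rfl, (isLeafAt_cons.1 hp).1, hp⟩
  · rintro ⟨_, _, _, _, hp⟩
    exact hp

theorem setOf_isLeafAt_leaf : {p | IsLeafAt leaf p} = {[]} := by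
  ext p
  rcases p with _ | ⟨j, q⟩
  · simp [isLeafAt_nil]
  · simp [isLeafAt_cons]

theorem finite_leavesInFirst {cs : List PTree} (h : ∀ c ∈ cs, {p | IsLeafAt c p}.Finite) (i : ℕ)
    (hi : i ≤ cs.length) : (leavesInFirst cs i).Finite := by
  induction i with
  | zero => simp [leavesInFirst_zero]
  | succ i ih =>
    rw [leavesInFirst_succ hi]
    exact (ih (by omega)).union ((h _ (List.getElem_mem _)).image _)

theorem finite_setOf_isLeafAt (t : PTree) : {p | IsLeafAt t p}.Finite := by
  induction t using induction_children with
  | h cs ih =>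
    by_cases hcs : cs = []
    · subst hcs
      simp [setOf_isLeafAt_leaf]
    · rw [setOf_isLeafAt_node hcs]
      exact finite_leavesInFirst ih _ le_rfl

theorem numLeaves_eq_ncard (t : PTree) : numLeaves t = {p | IsLeafAt t p}.ncard := rfl

theorem ncard_leavesInFirst (cs : List PTree) (i : ℕ) (hi : i ≤ cs.length) :
    (leavesInFirst cs i).ncard = ((cs.take i).map numLeaves).sum := by
  induction i with
  | zero => simp [leavesInFirst_zero]
  | succ i ih =>
    have hfin := finite_leavesInFirst (fun c (_ : c ∈ cs) => finite_setOf_isLeafAt c) i (by omega)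
    rw [leavesInFirst_succ hi, Set.ncard_union_eq _ hfin ((finite_setOf_isLeafAt _).image _),
      ih (by omega), Set.ncard_image_of_injective _ (List.cons_injective), ← numLeaves_eq_ncard,
      List.take_succ_eq_append_getElem hi]
    · simp only [List.map_append, List.sum_append, List.map_cons, List.map_nil, List.sum_cons,
        List.sum_nil, add_zero]
    · rw [Set.disjoint_left]
      rintro _ ⟨j, q, rfl, hj, _⟩ ⟨q', _, hq⟩
      simp only [List.cons.injEq] at hq
      omega

theorem numLeaves_leaf : numLeaves leaf = 1 := by
  rw [numLeaves_eq_ncard, setOf_isLeafAt_leaf, Set.ncard_singleton]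

theorem numLeaves_node {cs : List PTree} (hcs : cs ≠ []) :
    numLeaves (node cs) = (cs.map numLeaves).sum := by
  rw [numLeaves_eq_ncard, setOf_isLeafAt_node hcs, ncard_leavesInFirst _ _ le_rfl, List.take_length]

theorem numLeaves_pos (t : PTree) : 0 < numLeaves t := by
  induction t using induction_children with
  | h cs ih =>
    rcases cs with _ | ⟨c, cs⟩
    · simp [numLeaves_leaf]
    · rw [numLeaves_node (by simp)]
      have := ih c (by simp)
      simp only [List.map_cons, List.sum_cons]
      omega

/-- The number of leaves in the first `i` trees of `cs`. -/
noncomputable def leafOffset (cs : List PTree) (i : ℕ) : ℕ := ((cs.take i).map numLeaves).sum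

theorem leavesBefore_singleton {cs : List PTree} {i : ℕ} (hi : i < cs.length) :
    leavesBefore (node cs) [i] = leafOffset cs i := by
  rw [leafOffset, ← ncard_leavesInFirst cs i hi.le]
  change Set.ncard {q | _} = _
  congr 1
  ext q
  constructor
  · rintro ⟨h1, h2, h3⟩
    rcases q with _ | ⟨j, q⟩
    · have := isLeafAt_nil.1 h1
      simp_all
    · refine ⟨j, q, rfl, ?_, h1⟩
      rcases List.cons_lex_cons_iff.1 h2 with h | ⟨_, h⟩
      · exact h
      · simp at h
  · rintro ⟨j, q, rfl, hj, hq⟩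
    refine ⟨hq, List.Lex.rel hj, ?_⟩
    rw [List.cons_prefix_cons]
    omega

theorem leavesBefore_nil (t : PTree) : leavesBefore t [] = 0 := by
  change Set.ncard {q | _} = _
  convert Set.ncard_empty (List ℕ)
  ext q
  simp

end PTree

namespace PTree

theorem replaceLeaf_nil (t : PTree) : replaceLeaf [] t = leaf := by
  cases t; rfl

theorem replaceLeaf_cons (i : ℕ) (p : List ℕ) (cs : List PTree) :
    replaceLeaf (i :: p) (node cs) = node (cs.set i (replaceLeaf p (cs.getD i leaf))) := rfl

theorem sortCut_perm (t : PTree) (c : Finset (List ℕ)) : (sortCut t c).Perm c.toList :=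
  List.mergeSort_perm _ _

theorem mem_sortCut {t : PTree} {c : Finset (List ℕ)} {v : List ℕ} : v ∈ sortCut t c ↔ v ∈ c := by
  rw [(sortCut_perm t c).mem_iff, Finset.mem_toList]

/-- `t` has a non-leaf `i`-th child. -/
def HasInternalChild (t : PTree) (i : ℕ) : Prop :=
  ∃ cs ds : List PTree, t = node cs ∧ cs[i]? = some (node ds) ∧ ds ≠ []

theorem HasInternalChild.replaceLeaf {t : PTree} {i : ℕ} (h : HasInternalChild t i) {v : List ℕ}
    (hv : v ≠ []) (hvi : v ≠ [i]) : HasInternalChild (replaceLeaf v t) i := by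
  obtain ⟨cs, ds, rfl, hi, hds⟩ := h
  rcases v with _ | ⟨j, p⟩
  · exact absurd rfl hv
  rw [replaceLeaf_cons]
  by_cases hj : j = i
  · subst hj
    rcases p with _ | ⟨k, p⟩
    · exact absurd rfl hvi
    obtain ⟨hlt, he⟩ := List.getElem?_eq_some_iff.1 hi
    refine ⟨_, ds.set k (PTree.replaceLeaf p (ds.getD k leaf)), rfl, ?_, by simpa using hds⟩
    rw [List.getElem?_set_self hlt, List.getD_eq_getElem?_getD, hi]
    rfl
  · exact ⟨_, ds, rfl, by rw [List.getElem?_set_ne hj, hi], hds⟩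

theorem HasInternalChild.foldl {t : PTree} {i : ℕ} (h : HasInternalChild t i) (L : List (List ℕ))
    (h0 : [] ∉ L) (hi : [i] ∉ L) : HasInternalChild (L.foldl (fun s v => PTree.replaceLeaf v s) t) i := by
  induction L generalizing t with
  | nil => exact h
  | cons v L ih =>
    simp only [List.mem_cons, not_or] at h0 hi
    exact ih (h.replaceLeaf (Ne.symm h0.1) (Ne.symm hi.1)) h0.2 hi.2

theorem HasInternalChild.ne_leaf {t : PTree} {i : ℕ} (h : HasInternalChild t i) : t ≠ leaf := by
  obtain ⟨cs, ds, rfl, hi, hds⟩ := h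
  rintro h
  simp_all

theorem HasInternalChild.not_isCorolla {t : PTree} {i : ℕ} (h : HasInternalChild t i) :
    ¬ IsCorolla t := by
  obtain ⟨cs, ds, rfl, hi, hds⟩ := h
  rintro ⟨m, _, hm⟩
  rw [corolla, node.injEq] at hm
  subst hm
  rw [List.getElem?_replicate] at hi
  split at hi <;> simp_all

theorem foldl_replaceLeaf_children (L : List (List ℕ)) (hL : ∀ v ∈ L, ∃ j, v = [j]) (cs : List PTree) :
    ∃ cs', L.foldl (fun s v => replaceLeaf v s) (node cs) = node cs' ∧ cs'.length = cs.length ∧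
      ∀ j (hj : j < cs'.length), ([j] ∈ L ∨ cs[j]? = some leaf) → cs'[j] = leaf := by
  induction L generalizing cs with
  | nil =>
    refine ⟨cs, rfl, rfl, fun j hj h => ?_⟩
    simpa [hj] using h
  | cons v L ih =>
    obtain ⟨i, rfl⟩ := hL v (by simp)
    obtain ⟨cs', h1, h2, h3⟩ := ih (fun v hv => hL v (by simp [hv])) (cs.set i leaf)
    refine ⟨cs', ?_, by simpa using h2, fun j hj h => h3 j hj ?_⟩
    · rw [List.foldl_cons, replaceLeaf_cons, replaceLeaf_nil, h1]
    · rw [List.length_set] at h2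
      by_cases hij : i = j
      · subst hij
        right
        rw [List.getElem?_set_self (h2 ▸ hj)]
      · rw [List.getElem?_set_ne hij]
        rcases h with h | h
        · simp only [List.mem_cons, List.cons.injEq, and_true] at h
          rcases h with h | h
          · exact absurd h.symm hij
          · exact Or.inl h
        · exact Or.inr h

open Classical in
/-- The cut made of all the internal children of the root of `node cs`. -/
noncomputable def childCut (cs : List PTree) : Finset (List ℕ) :=
  (Finset.univ.filter fun i : Fin cs.length => cs[i] ≠ leaf).image fun i => [i.val]

theorem mem_childCut {cs : List PTree} {v : List ℕ} :
    v ∈ childCut cs ↔ ∃ i, ∃ h : i < cs.length, cs[i] ≠ leaf ∧ v = [i] := by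
  simp only [childCut, Finset.mem_image, Finset.mem_filter, Finset.mem_univ, true_and]
  constructor
  · rintro ⟨i, hi, rfl⟩
    exact ⟨i, i.2, hi, rfl⟩
  · rintro ⟨i, h, hi, rfl⟩
    exact ⟨⟨i, h⟩, hi, rfl⟩

theorem trunkTree_childCut (cs : List PTree) :
    trunkTree (node cs) (childCut cs) = corolla cs.length := by
  obtain ⟨cs', h1, h2, h3⟩ := foldl_replaceLeaf_children (sortCut (node cs) (childCut cs))
    (fun v hv => by
      obtain ⟨i, _, _, rfl⟩ := mem_childCut.1 (mem_sortCut.1 hv)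
      exact ⟨i, rfl⟩) cs
  rw [trunkTree, h1, corolla, node.injEq, List.eq_replicate_iff]
  refine ⟨h2, fun b hb => ?_⟩
  obtain ⟨j, hj, rfl⟩ := List.getElem_of_mem hb
  refine h3 j hj ?_
  by_cases hc : cs[j] = leaf
  · right
    rw [List.getElem?_eq_getElem (by omega), hc]
  · exact Or.inl (mem_sortCut.2 (mem_childCut.2 ⟨j, by omega, hc, rfl⟩))

theorem sortCut_singleton (t : PTree) (v : List ℕ) : sortCut t {v} = [v] := by
  simp [sortCut]

theorem trunkTree_root (t : PTree) : trunkTree t {[]} = leaf := by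
  simp [trunkTree, sortCut_singleton, replaceLeaf_nil]

theorem nil_mem_verticesList (t : PTree) : [] ∈ verticesList t := by
  cases t
  simp [verticesList]

theorem singleton_mem_verticesListAux (cs : List PTree) (k j : ℕ) (hj : j < cs.length) :
    [k + j] ∈ verticesListAux k cs := by
  induction cs generalizing k j with
  | nil => simp at hj
  | cons c cs ih =>
    rw [verticesListAux, List.mem_append]
    rcases j with _ | j
    · exact Or.inl (List.mem_map.2 ⟨[], nil_mem_verticesList c, rfl⟩)
    · right
      have := ih (k + 1) j (by simpa using hj)
      rwa [show k + (j + 1) = k + 1 + j by omega]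

theorem mem_internalFinset {t : PTree} {v : List ℕ} :
    v ∈ internalFinset t ↔ v ∈ verticesList t ∧ IsInternalAt t v := by
  simp [internalFinset]

theorem mem_cutsFinset {t : PTree} {c : Finset (List ℕ)} :
    c ∈ cutsFinset t ↔ c ⊆ internalFinset t ∧ ∀ v ∈ c, ∀ w ∈ c, v ≠ w → ¬ v <+: w := by
  simp [cutsFinset]

theorem isInternalAt_nil {cs : List PTree} (h : cs ≠ []) : IsInternalAt (node cs) [] :=
  ⟨cs, subtreeAt_nil _, h⟩

theorem exists_eq_node_of_ne_leaf {t : PTree} (h : t ≠ leaf) : ∃ cs, t = node cs ∧ cs ≠ [] := by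
  cases t with
  | node cs => exact ⟨cs, rfl, fun hcs => h (by rw [hcs])⟩

theorem isInternalAt_cons {cs : List PTree} {i : ℕ} {p : List ℕ}
    (h : IsInternalAt (node cs) (i :: p)) : ∃ hi : i < cs.length, cs[i] ≠ leaf := by
  obtain ⟨ds, h1, h2⟩ := h
  rw [subtreeAt_cons] at h1
  obtain ⟨c, hc, h1⟩ := Option.bind_eq_some_iff.1 h1
  obtain ⟨hi, rfl⟩ := List.getElem?_eq_some_iff.1 hc
  refine ⟨hi, fun hl => ?_⟩
  rw [hl] at h1
  rcases p with _ | ⟨j, p⟩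
  · rw [subtreeAt_nil] at h1
    simp_all
  · rw [subtreeAt_cons] at h1
    simp at h1

theorem root_mem_cutsFinset {cs : List PTree} (h : cs ≠ []) : {[]} ∈ cutsFinset (node cs) := by
  rw [mem_cutsFinset]
  refine ⟨?_, by simp⟩
  rw [Finset.singleton_subset_iff, mem_internalFinset]
  exact ⟨nil_mem_verticesList _, isInternalAt_nil h⟩

theorem childCut_mem_cutsFinset (cs : List PTree) : childCut cs ∈ cutsFinset (node cs) := by
  rw [mem_cutsFinset]
  constructor
  · intro v hv
    obtain ⟨i, hi, hc, rfl⟩ := mem_childCut.1 hv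
    rw [mem_internalFinset, verticesList]
    refine ⟨List.mem_cons_of_mem _ ?_, ?_⟩
    · simpa using singleton_mem_verticesListAux cs 0 i hi
    · obtain ⟨ds, hd, hne⟩ := exists_eq_node_of_ne_leaf hc
      refine ⟨ds, ?_, hne⟩
      rw [subtreeAt_cons, List.getElem?_eq_getElem hi, Option.bind_some, subtreeAt_nil, hd]
  · intro v hv w hw hne hp
    obtain ⟨i, _, _, rfl⟩ := mem_childCut.1 hv
    obtain ⟨j, _, _, rfl⟩ := mem_childCut.1 hw
    simp_all

theorem eq_root_of_nil_mem {t : PTree} {c : Finset (List ℕ)} (hc : c ∈ cutsFinset t)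
    (h : [] ∈ c) : c = {[]} := by
  rw [Finset.eq_singleton_iff_unique_mem]
  refine ⟨h, fun v hv => ?_⟩
  by_contra hne
  exact (mem_cutsFinset.1 hc).2 [] h v hv (Ne.symm hne) List.nil_prefix

/-- Apart from the root cut and the cut of all internal children of the root, an admissible cut
leaves a trunk with an internal vertex below the root. -/
theorem hasInternalChild_trunkTree {cs : List PTree} {c : Finset (List ℕ)}
    (hc : c ∈ cutsFinset (node cs)) (h0 : c ≠ {[]}) (h1 : c ≠ childCut cs) :
    ∃ i, HasInternalChild (trunkTree (node cs) c) i := by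
  have hnil : [] ∉ c := fun h => h0 (eq_root_of_nil_mem hc h)
  obtain ⟨hsub, hanti⟩ := mem_cutsFinset.1 hc
  have : ∃ i, ∃ hi : i < cs.length, cs[i] ≠ leaf ∧ [i] ∉ c := by
    by_contra! hcon
    refine h1 (Finset.Subset.antisymm (fun v hv => ?_) fun v hv => ?_)
    · rcases v with _ | ⟨i, p⟩
      · exact absurd hv hnil
      · obtain ⟨hi, hl⟩ := isInternalAt_cons (mem_internalFinset.1 (hsub hv)).2
        have hic := hcon i hi hl
        rw [mem_childCut]
        refine ⟨i, hi, hl, ?_⟩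
        by_contra hne
        exact hanti _ hic _ hv (Ne.symm hne) (by simp)
    · obtain ⟨i, hi, hl, rfl⟩ := mem_childCut.1 hv
      exact hcon i hi hl
  obtain ⟨i, hi, hl, hic⟩ := this
  obtain ⟨ds, hd, hne⟩ := exists_eq_node_of_ne_leaf hl
  refine ⟨i, HasInternalChild.foldl ⟨cs, ds, rfl, ?_, hne⟩ _ ?_ ?_⟩
  · rw [List.getElem?_eq_getElem hi, hd]
  · rwa [mem_sortCut]
  · rwa [mem_sortCut]

section Functionals

variable {A : Type*}

/-- Characters of the algebra of decorated forests. -/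
def IsCharD (f : DForest A → ℂ) : Prop := f [] = 1 ∧ ∀ F G, f (F ++ G) = f F * f G

theorem IsCharD.cons {f : DForest A → ℂ} (hf : IsCharD f) (d : PTree × List A) (F : DForest A) :
    f (d :: F) = f [d] * f F := hf.2 [d] F

theorem IsCharD.apply_eq {f : DForest A → ℂ} (hf : IsCharD f) (F : DForest A) :
    f F = (F.map fun d => f [d]).prod := by
  induction F with
  | nil => simpa using hf.1
  | cons d F ih => rw [hf.cons, ih, List.map_cons, List.prod_cons]

theorem isCharD_epsD : IsCharD (epsD : DForest A → ℂ) := by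
  refine ⟨by simp [epsD], fun s t => ?_⟩
  by_cases hs : s = [] <;> simp [epsD, hs]

theorem isCharD_charD [Ring A] (φ : A → ℂ) : IsCharD (charD φ) :=
  ⟨by simp [charD], fun s t => by simp [charD]⟩

theorem IsCharD.prunePart {f : DForest A → ℂ} (hf : IsCharD f) (d : PTree × List A)
    (c : Finset (List ℕ)) : f (prunePart d c) = ∏ v ∈ c, f [(subtree! d.1 v,
      (d.2.drop (leavesBefore d.1 v)).take (numSectors (subtree! d.1 v)))] := by
  rw [hf.apply_eq, PTree.prunePart, List.map_map, ← Finset.prod_map_toList]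
  exact ((sortCut_perm d.1 c).map _).prod_eq

variable [Zero A]

theorem convD_cons (f g : DForest A → ℂ) (d : PTree × List A) (F : DForest A) :
    convD f g (d :: F) = ∑ c ∈ cutsFinset d.1, ((forestSplits F).map fun pr =>
      f (trunkPart d c ++ pr.1) * g (prunePart d c ++ pr.2)).sum := by
  rw [convD, forestSplits, List.map_flatMap, List.flatMap, List.sum_flatten, List.map_map,
    ← Finset.sum_map_toList]
  simp only [Function.comp_def, List.map_map]

theorem convD_singleton (f g : DForest A → ℂ) (d : PTree × List A) :
    convD f g [d] = ∑ c ∈ cutsFinset d.1, f (trunkPart d c) * g (prunePart d c) := by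
  simp [convD_cons, forestSplits]

theorem isCharD_convD {f g : DForest A → ℂ} (hf : IsCharD f) (hg : IsCharD g) :
    IsCharD (convD f g) := by
  have hcons : ∀ d F, convD f g (d :: F) = convD f g [d] * convD f g F := fun d F => by
    rw [convD_cons, convD_singleton, Finset.sum_mul]
    refine Finset.sum_congr rfl fun c _ => ?_
    rw [convD, ← List.sum_map_mul_left]
    congr 2
    funext pr
    rw [hf.2, hg.2]
    ring
  have h0 : convD f g [] = 1 := by simp [convD, forestSplits, hf.1, hg.1]
  refine ⟨h0, fun F G => ?_⟩
  induction F with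
  | nil => simp [h0]
  | cons d F ih => rw [List.cons_append, hcons, ih, hcons d F, mul_assoc]

theorem isCharD_convPowD {f : DForest A → ℂ} (hf : IsCharD f) (k : ℕ) :
    IsCharD (convPowD f k) := by
  induction k with
  | zero => exact isCharD_epsD
  | succ k ih => exact isCharD_convD hf ih

end Functionals

theorem subtree!_nil (t : PTree) : subtree! t [] = t := by
  simp [subtree!, subtreeAt_nil]

theorem subtree!_singleton {cs : List PTree} {i : ℕ} (hi : i < cs.length) :
    subtree! (node cs) [i] = cs[i] := by
  simp [subtree!, subtreeAt_cons, hi, subtreeAt_nil]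

theorem prunePart_root {A : Type*} {d : PTree × List A} (hd : d.2.length ≤ numSectors d.1) :
    prunePart d {[]} = [d] := by
  rw [prunePart, sortCut_singleton, List.map_cons, List.map_nil, subtree!_nil, leavesBefore_nil,
    List.drop_zero, List.take_of_length_le hd]

open Classical in
/-- The value of a functional on a decorated tree, the single leaf being the unit. -/
noncomputable def treeVal {A : Type*} (g : DForest A → ℂ) (t : PTree) (w : List A) : ℂ :=
  if t = leaf then 1 else g [(t, w)]

theorem convD_charD_node {A : Type*} [Ring A] (φ : A → ℂ) {g : DForest A → ℂ} (hg : IsCharD g)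
    {cs : List PTree} (hcs : 2 ≤ cs.length) {w : List A} (hw : w.length ≤ numSectors (node cs)) :
    convD (charD φ) g [(node cs, w)] = g [(node cs, w)] +
      φ (trunkWord (node cs) (childCut cs) w).prod * ∏ i : Fin cs.length,
        treeVal g cs[i] ((w.drop (leafOffset cs i)).take (numSectors cs[i])) := by
  classical
  have hne : cs ≠ [] := by rintro rfl; simp at hcs
  have hdiff : ({[]} : Finset (List ℕ)) ≠ childCut cs := fun h => by
    have : [] ∈ childCut cs := h ▸ Finset.mem_singleton_self _
    obtain ⟨_, _, _, h⟩ := mem_childCut.1 this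
    simp at h
  have hcor : corolla cs.length ≠ leaf := fun h => by
    rw [corolla, node.injEq, List.replicate_eq_nil_iff] at h
    omega
  rw [convD_singleton, ← Finset.sum_subset (s₁ := {{[]}, childCut cs}), Finset.sum_pair hdiff]
  · congr 1
    · rw [prunePart_root hw]
      simp [trunkPart, trunkTree_root, (isCharD_charD φ).1]
    · congr 1
      · rw [trunkPart, trunkTree_childCut, if_neg hcor, charD]
        simp only [List.map_cons, List.map_nil, List.prod_cons, List.prod_nil, mul_one]
        rw [if_pos ⟨_, hcs, rfl⟩]
      · rw [hg.prunePart, childCut, Finset.prod_image (by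
          intro i _ j _ h
          simpa [Fin.ext_iff] using h), Finset.prod_filter]
        refine Finset.prod_congr rfl fun i _ => ?_
        rw [treeVal]
        by_cases h : cs[i] = leaf
        · simp [h]
        · rw [if_pos h, if_neg h, subtree!_singleton i.2, leavesBefore_singleton i.2]
          rfl
  · intro c hc
    rcases Finset.mem_insert.1 hc with rfl | hc
    · exact root_mem_cutsFinset hne
    · rw [Finset.mem_singleton.1 hc]
      exact childCut_mem_cutsFinset cs
  · intro c hc hc'
    simp only [Finset.mem_insert, Finset.mem_singleton, not_or] at hc'
    obtain ⟨i, hi⟩ := hasInternalChild_trunkTree hc hc'.1 hc'.2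
    rw [trunkPart, if_neg hi.ne_leaf, charD]
    simp [hi.not_isCorolla]

end PTree

namespace PTree

theorem foldl_replaceLeaf_ne_leaf (L : List (List ℕ)) (hL : [] ∉ L) (t : PTree) (ht : t ≠ leaf) :
    L.foldl (fun s v => replaceLeaf v s) t ≠ leaf := by
  induction L generalizing t with
  | nil => exact ht
  | cons v L ih =>
    simp only [List.mem_cons, not_or] at hL
    refine ih hL.2 _ ?_
    obtain ⟨cs, rfl, hcs⟩ := exists_eq_node_of_ne_leaf ht
    rcases v with _ | ⟨i, p⟩
    · exact absurd rfl hL.1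
    · beta_reduce
      rw [replaceLeaf_cons, Ne, node.injEq]
      simpa using hcs

theorem trunkTree_eq_leaf {t : PTree} (ht : t ≠ leaf) {c : Finset (List ℕ)}
    (hc : c ∈ cutsFinset t) (h : trunkTree t c = leaf) : c = {[]} := by
  by_contra hne
  refine foldl_replaceLeaf_ne_leaf (sortCut t c) (fun h0 => ?_) t ht h
  exact hne (eq_root_of_nil_mem hc (mem_sortCut.1 h0))

/-- A tree with at least one internal vertex and not more decorations than sectors. -/
def IsDecorated {A : Type*} (d : PTree × List A) : Prop :=
  d.1 ≠ leaf ∧ d.2.length ≤ numSectors d.1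

section Powers

variable {A : Type*}

theorem isDecorated_of_mem_prunePart {d e : PTree × List A} {c : Finset (List ℕ)}
    (hc : c ∈ cutsFinset d.1) (he : e ∈ prunePart d c) : IsDecorated e := by
  obtain ⟨v, hv, rfl⟩ := List.mem_map.1 he
  obtain ⟨cs, h1, h2⟩ := (mem_internalFinset.1 ((mem_cutsFinset.1 hc).1 (mem_sortCut.1 hv))).2
  refine ⟨?_, List.length_take_le _ _⟩
  simp [subtree!, h1, h2]

variable [Zero A]

theorem isDecorated_of_mem_forestSplits {F : DForest A} {pr : DForest A × DForest A}
    (hpr : pr ∈ forestSplits F) : ∀ d ∈ pr.2, IsDecorated d := by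
  induction F generalizing pr with
  | nil => simp_all [forestSplits]
  | cons d F ih =>
    obtain ⟨c, hc, h⟩ := List.mem_flatMap.1 hpr
    obtain ⟨q, hq, rfl⟩ := List.mem_map.1 h
    intro e he
    rcases List.mem_append.1 he with he | he
    · exact isDecorated_of_mem_prunePart (Finset.mem_toList.1 hc) he
    · exact ih hq e he

theorem convD_congr {f g h : DForest A → ℂ} (hgh : ∀ F, (∀ d ∈ F, IsDecorated d) → g F = h F)
    (F : DForest A) : convD f g F = convD f h F := by
  rw [convD, convD]
  congr 1
  exact List.map_congr_left fun pr hpr => by rw [hgh _ (isDecorated_of_mem_forestSplits hpr)]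

theorem convD_epsD (g : DForest A → ℂ) (F : DForest A) (hF : ∀ d ∈ F, IsDecorated d) :
    convD epsD g F = g F := by
  classical
  induction F generalizing g with
  | nil => simp [convD, forestSplits, epsD]
  | cons d F ih =>
    have hd := hF d (by simp)
    obtain ⟨cs, hcs, hne⟩ := exists_eq_node_of_ne_leaf hd.1
    rw [convD_cons, Finset.sum_eq_single {[]}]
    · rw [prunePart_root hd.2]
      simp only [trunkPart, trunkTree_root, if_true, List.nil_append]
      exact ih (fun G => g (d :: G)) fun e he => hF e (by simp [he])
    · intro c hc h0
      have ht : trunkTree d.1 c ≠ leaf := fun h => h0 (trunkTree_eq_leaf hd.1 hc h)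
      simp [trunkPart, ht, epsD]
    · intro h
      rw [hcs] at h
      exact absurd (root_mem_cutsFinset hne) h

theorem convD_add_left (f f' g : DForest A → ℂ) (F : DForest A) :
    convD (fun G => f G + f' G) g F = convD f g F + convD f' g F := by
  simp only [convD, add_mul, List.sum_map_add]

theorem convD_sum_right (f : DForest A → ℂ) {ι : Type*} (s : Finset ι) (c : ι → ℂ)
    (g : ι → DForest A → ℂ) (F : DForest A) :
    convD f (fun G => ∑ j ∈ s, c j * g j G) F = ∑ j ∈ s, c j * convD f (g j) F := by
  rw [convD]
  simp only [convD]
  induction forestSplits F with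
  | nil => simp
  | cons pr L ih =>
    simp only [List.map_cons, List.sum_cons, ih, mul_add, Finset.sum_add_distrib]
    rw [Finset.mul_sum]
    congr 1
    exact Finset.sum_congr rfl fun j _ => by ring

end Powers

section CharPowers

open Polynomial

variable {A : Type*} [Ring A]

theorem convPowD_charD (φ : A → ℂ) (k : ℕ) (F : DForest A) (hF : ∀ d ∈ F, IsDecorated d) :
    convPowD (charD φ) k F =
      ∑ j ∈ Finset.range (k + 1), (k.choose j : ℂ) * convPowD (charHatD φ) j F := by
  induction k generalizing F with
  | zero => simp [convPowD]
  | succ k ih =>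
    have e : (charD φ : DForest A → ℂ) = fun G => epsD G + charHatD φ G := by
      funext G
      simp [charHatD]
    rw [convPowD, convD_congr ih, convD_sum_right]
    have e2 : ∀ j, convD (charD φ) (convPowD (charHatD φ) j) F =
        convPowD (charHatD φ) j F + convPowD (charHatD φ) (j + 1) F := fun j => by
      rw [convPowD, e, convD_add_left, convD_epsD _ F hF]
    simp only [e2, mul_add, Finset.sum_add_distrib]
    rw [Finset.sum_range_succ' _ (k + 1), Finset.sum_range_succ' _ k]
    simp only [Nat.choose_succ_succ, Nat.cast_add, add_mul, Finset.sum_add_distrib]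
    rw [Finset.sum_range_succ (fun j => ((k.choose (j + 1) : ℕ) : ℂ) * _)]
    simp
    ring

theorem exists_polynomial_tree (φ : A → ℂ) {t : PTree} (ht : IsSchroder t) (hne : t ≠ leaf)
    {w : List A} (hw : w.length ≤ numSectors t) :
    ∃ P : ℂ[X], ∀ k : ℕ, convPowD (charD φ) k [(t, w)] = P.eval (k : ℂ) := by
  induction ht generalizing w with
  | leaf => exact absurd rfl hne
  | node cs h2 hcs ih =>
    have hchild : ∀ i : Fin cs.length, ∃ P : ℂ[X], ∀ k : ℕ, treeVal (convPowD (charD φ) k) cs[i]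
        ((w.drop (leafOffset cs i)).take (numSectors cs[i])) = P.eval (k : ℂ) := fun i => by
      by_cases hi : cs[i] = leaf
      · exact ⟨1, fun k => by rw [treeVal, if_pos hi, eval_one]⟩
      · simp only [treeVal, if_neg hi]
        exact ih _ (List.getElem_mem _) hi (List.length_take_le _ _)
    choose P hP using hchild
    refine exists_polynomial_of_sub
      (Q := C (φ (trunkWord (node cs) (childCut cs) w).prod) * ∏ i, P i) fun k => ?_
    rw [convPowD, convD_charD_node φ (isCharD_convPowD (isCharD_charD φ) k) h2 hw, eval_mul, eval_C,
      eval_prod]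
    simp only [hP]

theorem exists_polynomial_forest (φ : A → ℂ) (F : DForest A) (hF : GoodForest F) :
    ∃ P : ℂ[X], (∀ k : ℕ, convPowD (charD φ) k F = P.eval (k : ℂ)) ∧
      logStarD φ F = (derivative P).eval 0 := by
  have hP : ∃ P : ℂ[X], ∀ k : ℕ, convPowD (charD φ) k F = P.eval (k : ℂ) := by
    induction F with
    | nil => exact ⟨1, fun k => by rw [(isCharD_convPowD (isCharD_charD φ) k).1, eval_one]⟩
    | cons d F ih =>
      obtain ⟨P, hP⟩ := ih fun e he => hF e (by simp [he])
      obtain ⟨h1, h2, h3⟩ := hF d (by simp)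
      obtain ⟨Q, hQ⟩ := exists_polynomial_tree φ h1 h2 h3.le
      exact ⟨Q * P, fun k => by
        rw [(isCharD_convPowD (isCharD_charD φ) k).cons, hP, eval_mul, ← hQ]⟩
  obtain ⟨P, hP⟩ := hP
  refine ⟨P, hP, logSeries_eq_derivative fun k => ?_⟩
  rw [← hP, convPowD_charD φ k F fun d hd => ⟨(hF d hd).2.1, (hF d hd).2.2.le⟩]

end CharPowers
end PTree

namespace PTree

theorem leafOffset_zero (cs : List PTree) : leafOffset cs 0 = 0 := by simp [leafOffset]

theorem leafOffset_cons_succ (c : PTree) (cs : List PTree) (i : ℕ) :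
    leafOffset (c :: cs) (i + 1) = numSectors c + 1 + leafOffset cs i := by
  have := numLeaves_pos c
  simp only [leafOffset, numSectors, List.take_succ_cons, List.map_cons, List.sum_cons]
  omega

theorem removedIdx_childCut {cs : List PTree} {i : ℕ} :
    RemovedIdx (node cs) (childCut cs) i ↔ ∃ j, ∃ h : j < cs.length,
      leafOffset cs j ≤ i ∧ i < leafOffset cs j + numSectors cs[j] := by
  constructor
  · rintro ⟨v, hv, h⟩
    obtain ⟨j, hj, _, rfl⟩ := mem_childCut.1 hv
    rw [leavesBefore_singleton hj, subtree!_singleton hj] at h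
    exact ⟨j, hj, h⟩
  · rintro ⟨j, hj, h⟩
    refine ⟨[j], mem_childCut.2 ⟨j, hj, fun hl => ?_, rfl⟩, ?_⟩
    · rw [hl, numSectors, numLeaves_leaf] at h
      omega
    · rwa [leavesBefore_singleton hj, subtree!_singleton hj]

theorem removedIdx_childCut_of_lt {c : PTree} {cs : List PTree} {i : ℕ} (h : i < numSectors c) :
    RemovedIdx (node (c :: cs)) (childCut (c :: cs)) i :=
  removedIdx_childCut.2 ⟨0, by simp, by simpa [leafOffset_zero] using h⟩

theorem not_removedIdx_childCut (c : PTree) (cs : List PTree) :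
    ¬ RemovedIdx (node (c :: cs)) (childCut (c :: cs)) (numSectors c) := by
  rw [removedIdx_childCut]
  rintro ⟨j, hj, h1, h2⟩
  rcases j with _ | j
  · simp [leafOffset_zero] at h2
  · rw [leafOffset_cons_succ] at h1
    omega

theorem removedIdx_childCut_add {c : PTree} {cs : List PTree} {i : ℕ} :
    RemovedIdx (node (c :: cs)) (childCut (c :: cs)) (numSectors c + 1 + i) ↔
      RemovedIdx (node cs) (childCut cs) i := by
  rw [removedIdx_childCut, removedIdx_childCut]
  constructor
  · rintro ⟨j, hj, h1, h2⟩
    rcases j with _ | j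
    · simp only [leafOffset_zero, List.getElem_cons_zero] at h2
      omega
    · simp only [leafOffset_cons_succ, List.getElem_cons_succ] at h1 h2
      exact ⟨j, by simpa using hj, by omega, by omega⟩
  · rintro ⟨j, hj, h1, h2⟩
    refine ⟨j + 1, by simpa using hj, ?_, ?_⟩ <;>
    simp only [leafOffset_cons_succ, List.getElem_cons_succ] <;> omega

section TrunkWord

variable {A : Type*} [Zero A]

theorem trunkWord_childCut_eq_nil {c : PTree} (cs : List PTree) {u : List A}
    (hu : u.length = numSectors c) :
    trunkWord (node (c :: cs)) (childCut (c :: cs)) u = [] := by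
  rw [trunkWord, List.map_eq_nil_iff, List.filter_eq_nil_iff]
  intro i hi
  rw [List.mem_range, hu] at hi
  simpa using removedIdx_childCut_of_lt hi

theorem trunkWord_childCut_cons {c : PTree} (cs : List PTree) {u : List A}
    (hu : u.length = numSectors c) (a : A) (v : List A) :
    trunkWord (node (c :: cs)) (childCut (c :: cs)) (u ++ a :: v) =
      a :: trunkWord (node cs) (childCut cs) v := by
  have h0 := trunkWord_childCut_eq_nil cs hu
  rw [trunkWord, List.map_eq_nil_iff] at h0
  rw [trunkWord, show (u ++ a :: v).length = (u.length + 1) + v.length by simp; omega,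
    List.range_add, List.filter_append, List.range_succ, List.filter_append, h0, List.filter_map,
    List.map_append, List.map_map, List.nil_append, trunkWord]
  have h1 := not_removedIdx_childCut c cs
  rw [← hu] at h1
  have h2 : ∀ i, RemovedIdx (node (c :: cs)) (childCut (c :: cs)) (u.length + 1 + i) ↔
      RemovedIdx (node cs) (childCut cs) i := fun i => by rw [hu, removedIdx_childCut_add]
  have h3 : ∀ i, u.length + 1 + i - u.length = i + 1 := fun i => by omega
  have h4 : ∀ i, ¬ u.length + 1 + i < u.length := fun i => by omega
  simp [Function.comp_def, h1, h3, h4, List.getElem?_append]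
  congr 1
  exact List.filter_congr fun i _ => by rw [decide_eq_decide.2 (h2 i)]

/-- The contribution of the corolla at the root of `node cs` times that of its children. -/
noncomputable def rootProd (f : List A → ℂ) (E : PTree → List A → ℂ) (cs : List PTree)
    (w : List A) : ℂ :=
  f (trunkWord (node cs) (childCut cs) w) * ∏ i : Fin cs.length,
    E cs[i] ((w.drop (leafOffset cs i)).take (numSectors cs[i]))

theorem rootProd_singleton (f : List A → ℂ) (E : PTree → List A → ℂ) {c : PTree} {u : List A}
    (hu : u.length = numSectors c) : rootProd f E [c] u = f [] * E c u := by
  rw [rootProd, trunkWord_childCut_eq_nil _ hu]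
  simp [leafOffset_zero, ← hu]

theorem rootProd_cons (f : List A → ℂ) (E : PTree → List A → ℂ) {c : PTree} (cs : List PTree)
    {u : List A} (hu : u.length = numSectors c) (a : A) (v : List A) :
    rootProd f E (c :: cs) (u ++ a :: v) = E c u * rootProd (fun s => f (a :: s)) E cs v := by
  rw [rootProd, trunkWord_childCut_cons _ hu, rootProd]
  have e : ∏ i : Fin (c :: cs).length, E (c :: cs)[i]
      (((u ++ a :: v).drop (leafOffset (c :: cs) i)).take (numSectors (c :: cs)[i])) =
      E c u * ∏ i : Fin cs.length, E cs[i]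
        ((v.drop (leafOffset cs i)).take (numSectors cs[i])) := by
    refine (Fin.prod_univ_succ (n := cs.length) _).trans ?_
    congr 1
    · simp [leafOffset_zero, ← hu]
    · refine Finset.prod_congr rfl fun i _ => ?_
      simp only [Fin.val_succ, leafOffset_cons_succ, ← hu, Fin.getElem_fin, List.getElem_cons_succ]
      congr 2
      rw [show u.length + 1 + leafOffset cs i = u.length + (leafOffset cs i + 1) by omega,
        List.drop_length_add_append, List.drop_succ_cons]
  rw [e]
  ring

end TrunkWord

section Sums

/-- Nonempty lists of Schröder trees with `n + 1` leaves in total. -/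
def schroderForests (n : ℕ) : Set (List PTree) :=
  {cs | cs ≠ [] ∧ (∀ c ∈ cs, IsSchroder c) ∧ (cs.map numLeaves).sum = n + 1}

theorem singleton_mem_schroderForests {n : ℕ} {t : PTree} :
    [t] ∈ schroderForests n ↔ t ∈ ST n := by
  simp [schroderForests, ST]

theorem cons_mem_schroderForests {n : ℕ} {c : PTree} {cs : List PTree} (hcs : cs ≠ []) :
    c :: cs ∈ schroderForests n ↔ ∃ i < n, c ∈ ST i ∧ cs ∈ schroderForests (n - (i + 1)) := by
  simp only [schroderForests, ST, Set.mem_ofPred_eq, List.map_cons, List.sum_cons,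
    List.forall_mem_cons]
  constructor
  · rintro ⟨_, ⟨h1, h2⟩, h3⟩
    have := numLeaves_pos c
    have hp : 0 < (cs.map numLeaves).sum := by
      obtain ⟨d, ds, rfl⟩ := List.exists_cons_of_ne_nil hcs
      have := numLeaves_pos d
      simp only [List.map_cons, List.sum_cons]
      omega
    exact ⟨numLeaves c - 1, by omega, ⟨h1, by omega⟩, hcs, h2, by omega⟩
  · rintro ⟨i, hi, ⟨h1, h2⟩, _, h3, h4⟩
    exact ⟨by simp, ⟨h1, h3⟩, by omega⟩

theorem node_mem_ST {n : ℕ} {cs : List PTree} (hcs : cs ≠ []) :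
    node cs ∈ ST n ↔ cs ∈ schroderForests n ∧ cs.length ≠ 1 := by
  simp only [ST, schroderForests, Set.mem_ofPred_eq, numLeaves_node hcs]
  constructor
  · rintro ⟨h, hn⟩
    cases h with
    | leaf => exact absurd rfl hcs
    | node _ h2 h3 => exact ⟨⟨hcs, h3, hn⟩, by omega⟩
  · rintro ⟨⟨_, h3, hn⟩, h1⟩
    have := List.length_pos_of_ne_nil hcs
    exact ⟨.node _ (by omega) h3, hn⟩

theorem finite_ST_and_schroderForests (n : ℕ) : (ST n).Finite ∧ (schroderForests n).Finite := by
  induction n using Nat.strong_induction_on with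
  | _ n ih =>
    have h2 : {cs ∈ schroderForests n | cs.length ≠ 1}.Finite := by
      refine ((Set.finite_lt_nat n).biUnion (t := fun i =>
        Set.image2 List.cons (ST i) (schroderForests (n - (i + 1)))) fun i hi =>
          (ih i hi).1.image2 _ (ih _ (by simp at hi; omega)).2).subset ?_
      rintro (_ | ⟨c, cs⟩) ⟨h, hlen⟩
      · exact absurd rfl h.1
      · have hcs : cs ≠ [] := by rintro rfl; simp at hlen
        obtain ⟨i, hi, hc⟩ := (cons_mem_schroderForests hcs).1 h
        exact Set.mem_biUnion hi ⟨c, hc.1, cs, hc.2, rfl⟩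
    have h1 : (ST n).Finite := by
      refine ((h2.image node).insert leaf).subset fun t ht => ?_
      by_cases hl : t = leaf
      · exact Or.inl hl
      · obtain ⟨cs, rfl, hcs⟩ := exists_eq_node_of_ne_leaf hl
        exact Or.inr ⟨cs, (node_mem_ST hcs).1 ht, rfl⟩
    refine ⟨h1, ((h1.image fun t => [t]).union h2).subset fun cs hcs => ?_⟩
    by_cases hlen : cs.length = 1
    · obtain ⟨t, rfl⟩ := List.length_eq_one_iff.1 hlen
      exact Or.inl ⟨t, singleton_mem_schroderForests.1 hcs, rfl⟩
    · exact Or.inr ⟨hcs, hlen⟩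

/-- The Schröder trees with `n + 1` leaves. -/
noncomputable def treesFinset (n : ℕ) : Finset PTree :=
  (finite_ST_and_schroderForests n).1.toFinset

/-- The nonempty lists of Schröder trees with `n + 1` leaves in total. -/
noncomputable def forestsFinset (n : ℕ) : Finset (List PTree) :=
  (finite_ST_and_schroderForests n).2.toFinset

theorem mem_treesFinset {n : ℕ} {t : PTree} : t ∈ treesFinset n ↔ t ∈ ST n := by
  simp [treesFinset]

theorem mem_forestsFinset {n : ℕ} {cs : List PTree} :
    cs ∈ forestsFinset n ↔ cs ∈ schroderForests n := by
  simp [forestsFinset]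

theorem sum_forestsFinset_length_eq_one (H : List PTree → ℂ) (n : ℕ) :
    ∑ cs ∈ forestsFinset n with cs.length = 1, H cs = ∑ t ∈ treesFinset n, H [t] := by
  refine (Finset.sum_bij (fun t _ => [t]) (fun t ht => ?_) (fun _ _ _ _ h => by simpa using h)
    (fun cs hcs => ?_) fun _ _ => rfl).symm
  · simpa [mem_forestsFinset, singleton_mem_schroderForests, mem_treesFinset] using ht
  · rw [Finset.mem_filter, mem_forestsFinset] at hcs
    obtain ⟨t, rfl⟩ := List.length_eq_one_iff.1 hcs.2
    exact ⟨t, mem_treesFinset.2 (singleton_mem_schroderForests.1 hcs.1), rfl⟩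

theorem sum_forestsFinset_length_ne_one (H : List PTree → ℂ) (n : ℕ) :
    ∑ cs ∈ forestsFinset n with ¬ cs.length = 1, H cs =
      ∑ i : Fin n, ∑ t ∈ treesFinset i, ∑ cs ∈ forestsFinset (n - (i + 1)), H (t :: cs) := by
  simp only [← Finset.sum_product', Finset.sum_sigma']
  refine (Finset.sum_bij (fun x _ => x.2.1 :: x.2.2) ?_ ?_ ?_ fun _ _ => rfl).symm
  · rintro ⟨i, t, cs⟩ h
    simp only [Finset.mem_sigma, Finset.mem_univ, true_and, Finset.mem_product, mem_treesFinset,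
      mem_forestsFinset] at h
    rw [Finset.mem_filter, mem_forestsFinset, cons_mem_schroderForests h.2.1]
    exact ⟨⟨i, i.2, h⟩, by simp [h.2.1]⟩
  · rintro ⟨i, t, cs⟩ h ⟨i', t', cs'⟩ h' e
    simp only [Finset.mem_sigma, Finset.mem_univ, true_and, Finset.mem_product, mem_treesFinset,
      mem_forestsFinset] at h h'
    simp only [List.cons.injEq] at e
    obtain ⟨rfl, rfl⟩ := e
    have hi : i = i' := Fin.ext (Nat.succ_injective (h.1.2.symm.trans h'.1.2))
    subst hi
    rfl
  · rintro (_ | ⟨c, cs⟩) h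
    · rw [Finset.mem_filter, mem_forestsFinset] at h
      exact absurd rfl h.1.1
    · rw [Finset.mem_filter, mem_forestsFinset] at h
      have hcs : cs ≠ [] := by rintro rfl; simp at h
      obtain ⟨i, hi, hc⟩ := (cons_mem_schroderForests hcs).1 h.1
      exact ⟨⟨⟨i, hi⟩, c, cs⟩, by simpa [mem_treesFinset, mem_forestsFinset] using hc, rfl⟩

theorem sum_treesFinset (H : PTree → ℂ) {n : ℕ} (hn : n ≠ 0) :
    ∑ t ∈ treesFinset n, H t = ∑ cs ∈ forestsFinset n with ¬ cs.length = 1, H (node cs) := by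
  refine (Finset.sum_bij (fun cs _ => node cs) (fun cs hcs => ?_)
    (fun _ _ _ _ h => by simpa using h) (fun t ht => ?_) fun _ _ => rfl).symm
  · rw [Finset.mem_filter, mem_forestsFinset] at hcs
    exact mem_treesFinset.2 ((node_mem_ST hcs.1.1).2 hcs)
  · rw [mem_treesFinset] at ht
    have hl : t ≠ leaf := by
      rintro rfl
      have := ht.2
      rw [numLeaves_leaf] at this
      omega
    obtain ⟨cs, rfl, hcs⟩ := exists_eq_node_of_ne_leaf hl
    exact ⟨cs, by simpa [mem_forestsFinset] using (node_mem_ST hcs).1 ht, rfl⟩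

theorem numSectors_of_mem_treesFinset {n : ℕ} {t : PTree} (ht : t ∈ treesFinset n) :
    numSectors t = n := by
  rw [numSectors, (mem_treesFinset.1 ht).2, Nat.add_sub_cancel]

variable {A : Type*} [Zero A]

/-- Summing over Schröder forests on `w` amounts to summing over the cuts of `w`. -/
theorem sum_rootProd (E : PTree → List A → ℂ) (f : List A → ℂ) (w : List A) :
    ∑ cs ∈ forestsFinset w.length, rootProd f E cs w =
      wordConv f (fun g => ∑ t ∈ treesFinset g.length, E t g) w := by
  induction hn : w.length using Nat.strong_induction_on generalizing f w with
  | _ n ih =>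
    subst hn
    rw [← Finset.sum_filter_add_sum_filter_not _ (fun cs => cs.length = 1),
      sum_forestsFinset_length_eq_one, sum_forestsFinset_length_ne_one, wordConv,
      cutSum_eq_first_gap]
    congr 1
    · simp only [List.map_nil, List.prod_nil, mul_one, Finset.mul_sum]
      exact Finset.sum_congr rfl fun t ht =>
        rootProd_singleton _ _ (numSectors_of_mem_treesFinset ht).symm
    · refine Finset.sum_congr rfl fun i _ => ?_
      have hi : (w.take i).length = i := by simp
      have key := ih (w.drop (i + 1)).length (by simp; omega) (fun s => f (w[i] :: s)) _ rfl
      have e : (fun s g gs => f (w[i] :: s) * ((∑ t ∈ treesFinset (w.take i).length, E t (w.take i)) *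
          ((g :: gs).map fun g => ∑ t ∈ treesFinset g.length, E t g).prod)) =
        fun s g gs => (∑ t ∈ treesFinset (w.take i).length, E t (w.take i)) * (f (w[i] :: s) *
          ((∑ t ∈ treesFinset g.length, E t g) *
            (gs.map fun g => ∑ t ∈ treesFinset g.length, E t g).prod)) := by
        funext s g gs
        rw [List.map_cons, List.prod_cons]
        ring
      rw [e, cutSum_const_mul, hi, Finset.sum_mul]
      rw [wordConv, List.length_drop] at key
      rw [← key]
      refine Finset.sum_congr rfl fun t ht => ?_
      rw [Finset.mul_sum]
      refine Finset.sum_congr rfl fun cs _ => ?_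
      rw [← rootProd_cons _ _ _ (hi.trans (numSectors_of_mem_treesFinset ht).symm)]
      congr 1
      simp

end Sums
end PTree

section IotaPullback

open PTree Polynomial

variable {A : Type*}

/-- The sum of the values of `g` over the Schröder trees `t` with as many sectors as `w` has letters. -/
noncomputable def treeSum (g : DForest A → ℂ) (w : List A) : ℂ :=
  ∑ t ∈ treesFinset w.length, treeVal g t w

theorem treesFinset_zero : treesFinset 0 = {leaf} := by
  ext t
  rw [mem_treesFinset, Finset.mem_singleton]
  constructor
  · intro ht
    by_contra hl
    obtain ⟨cs, rfl, hcs⟩ := exists_eq_node_of_ne_leaf hl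
    obtain ⟨h, h1⟩ := (node_mem_ST hcs).1 ht
    rcases cs with _ | ⟨c, _ | ⟨d, cs⟩⟩
    · exact hcs rfl
    · simp at h1
    · obtain ⟨i, hi, _⟩ := (cons_mem_schroderForests (by simp)).1 h
      omega
  · rintro rfl
    exact ⟨.leaf, numLeaves_leaf⟩

theorem treeSum_nil (g : DForest A → ℂ) : treeSum g [] = 1 := by
  simp [treeSum, treesFinset_zero, treeVal]

theorem treeSum_convD_charD [Ring A] {φ : A → ℂ} (hφ : φ 1 = 1) {g : DForest A → ℂ}
    (hg : IsCharD g) (w : List A) :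
    treeSum (convD (charD φ) g) w = wordConv (fun s => φ s.prod) (treeSum g) w := by
  by_cases hw : w = []
  · subst hw
    simp [wordConv, cutSum, treeSum_nil, hφ]
  · have hn : w.length ≠ 0 := by simpa using hw
    have key := sum_rootProd (treeVal g) (fun s => φ s.prod) w
    change _ = wordConv _ (treeSum g) w at key
    rw [← key, ← Finset.sum_filter_add_sum_filter_not _ (fun cs => cs.length = 1),
      sum_forestsFinset_length_eq_one, treeSum, sum_treesFinset _ hn]
    have e1 : ∑ t ∈ treesFinset w.length, rootProd (fun s => φ s.prod) (treeVal g) [t] w =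
        ∑ cs ∈ forestsFinset w.length with ¬ cs.length = 1, treeVal g (node cs) w := by
      rw [← sum_treesFinset (fun t => treeVal g t w) hn]
      refine Finset.sum_congr rfl fun t ht => ?_
      rw [rootProd_singleton _ _ (numSectors_of_mem_treesFinset ht).symm, List.prod_nil, hφ,
        one_mul]
    rw [e1, ← Finset.sum_add_distrib]
    refine Finset.sum_congr rfl fun cs hcs => ?_
    rw [Finset.mem_filter, mem_forestsFinset] at hcs
    have hne : node cs ≠ leaf := fun h => hcs.1.1 (by simpa using h)
    have h2 := List.length_pos_of_ne_nil hcs.1.1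
    have hs := numSectors_of_mem_treesFinset
      (mem_treesFinset.2 ((node_mem_ST hcs.1.1).2 hcs))
    rw [treeVal, if_neg hne, convD_charD_node φ hg (by omega) hs.ge, treeVal, if_neg hne, rootProd]

theorem treeSum_convPowD_charD [Ring A] {φ : A → ℂ} (hφ : φ 1 = 1) (k : ℕ) :
    treeSum (convPowD (charD φ) k) = onWord (convPowW (charW φ) k) := by
  induction k with
  | zero =>
    funext w
    by_cases hw : w = []
    · subst hw
      rw [treeSum_nil, onWord_nil, convPowW, isCharW_epsW.1]
    · have hn : w.length ≠ 0 := by simpa using hw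
      rw [convPowW, onWord_epsW_of_ne_nil hw, treeSum]
      refine Finset.sum_eq_zero fun t ht => ?_
      have hl : t ≠ leaf := by
        rintro rfl
        have := (mem_treesFinset.1 ht).2
        rw [numLeaves_leaf] at this
        omega
      rw [treeVal, if_neg hl]
      simp [convPowD, epsD]
  | succ k ih =>
    funext w
    have hword : onWord (charW φ) = fun s => φ s.prod := by
      funext s
      by_cases hs : s = []
      · subst hs
        simp [onWord_nil, charW, hφ]
      · obtain ⟨v, rfl⟩ : ∃ v : WordNE A, v.1 = s := ⟨⟨s, hs⟩, rfl⟩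
        rw [onWord_val]
        simp [charW]
    rw [convPowD, treeSum_convD_charD hφ (isCharD_convPowD (isCharD_charD φ) k), ih, convPowW,
      onWord_convW (isCharW_charW φ) (isCharW_convPowW (isCharW_charW φ) k), hword]

open Classical in
/-- The tuples of Schröder trees appearing in the image of a sentence under `ι`. -/
noncomputable def treeLists : Sentence A → Finset (List PTree)
  | [] => {[]}
  | w :: ws => (treesFinset w.1.length ×ˢ treeLists ws).image fun x => x.1 :: x.2

theorem mem_treeLists {ws : Sentence A} {ts : List PTree} : ts ∈ treeLists ws ↔
    List.Forall₂ (fun t (w : WordNE A) => IsSchroder t ∧ numLeaves t = w.1.length + 1) ts ws := by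
  classical
  induction ws generalizing ts with
  | nil => simp [treeLists]
  | cons w ws ih =>
    rw [treeLists, Finset.mem_image, List.forall₂_cons_right_iff]
    constructor
    · rintro ⟨⟨t, us⟩, h, rfl⟩
      rw [Finset.mem_product] at h
      exact ⟨t, us, mem_treesFinset.1 h.1, ih.1 h.2, rfl⟩
    · rintro ⟨t, us, h1, h2, rfl⟩
      exact ⟨(t, us), Finset.mem_product.2 ⟨mem_treesFinset.2 h1, ih.2 h2⟩, rfl⟩

theorem iotaDual_eq_sum (f : DForest A → ℂ) (ws : Sentence A) :
    iotaDual f ws = ∑ ts ∈ treeLists ws, f (ts.zip (ws.map Subtype.val)) := by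
  have h : {ts : List PTree | List.Forall₂ (fun t (w : WordNE A) =>
      IsSchroder t ∧ numLeaves t = w.1.length + 1) ts ws} = treeLists ws :=
    Set.ext fun ts => mem_treeLists.symm
  rw [iotaDual, h, finsum_mem_coe_finset]

theorem goodForest_of_mem_treeLists {ws : Sentence A} {ts : List PTree} (h : ts ∈ treeLists ws) :
    GoodForest (ts.zip (ws.map Subtype.val)) := by
  rw [mem_treeLists] at h
  induction h with
  | nil => simp [GoodForest]
  | cons h _ ih =>
    rename_i t w ts ws _
    refine List.forall_mem_cons.2 ⟨⟨h.1, ?_, ?_⟩, ih⟩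
    · rintro rfl
      have := h.2
      rw [numLeaves_leaf] at this
      have := List.length_pos_of_ne_nil w.2
      omega
    · change w.1.length = _
      rw [numSectors, h.2, Nat.add_sub_cancel]

theorem iotaDual_of_isCharD {f : DForest A → ℂ} (hf : IsCharD f) (ws : Sentence A) :
    iotaDual f ws = (ws.map fun w => treeSum f w.1).prod := by
  classical
  rw [iotaDual_eq_sum]
  induction ws with
  | nil => simp [treeLists, hf.1]
  | cons w ws ih =>
    rw [treeLists, Finset.sum_image (fun x _ y _ h => by
      simp only [List.cons.injEq] at h
      exact Prod.ext h.1 h.2), Finset.sum_product]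
    change ∑ t ∈ treesFinset w.1.length, ∑ ts ∈ treeLists ws, f ((t, w.1) :: ts.zip (ws.map Subtype.val)) = _
    rw [List.map_cons, List.prod_cons, ← ih, treeSum, Finset.sum_mul_sum]
    refine Finset.sum_congr rfl fun t ht => Finset.sum_congr rfl fun ts _ => ?_
    have hl : t ≠ leaf := by
      rintro rfl
      have := (mem_treesFinset.1 ht).2
      rw [numLeaves_leaf] at this
      have := List.length_pos_of_ne_nil w.2
      omega
    rw [hf.cons, treeVal, if_neg hl]

theorem iotaDual_convPowD_charD [Ring A] {φ : A → ℂ} (hφ : φ 1 = 1) (k : ℕ) (s : Sentence A) :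
    iotaDual (convPowD (charD φ) k) s = convPowW (charW φ) k s := by
  rw [iotaDual_of_isCharD (isCharD_convPowD (isCharD_charD φ) k),
    (isCharW_convPowW (isCharW_charW φ) k).apply_eq, treeSum_convPowD_charD hφ]

theorem exists_polynomial_iotaDual [Ring A] {φ : A → ℂ} (hφ : φ 1 = 1) (s : Sentence A) :
    ∃ P : ℂ[X], (∀ k : ℕ, convPowW (charW φ) k s = P.eval (k : ℂ)) ∧
      iotaDual (logStarD φ) s = (derivative P).eval 0 := by
  choose! P hP using fun F : DForest A => exists_polynomial_forest φ F
  refine ⟨∑ ts ∈ treeLists s, P (ts.zip (s.map Subtype.val)), fun k => ?_, ?_⟩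
  · rw [← iotaDual_convPowD_charD hφ, iotaDual_eq_sum, eval_finsetSum]
    exact Finset.sum_congr rfl fun ts hts => (hP _ (goodForest_of_mem_treeLists hts)).1 k
  · rw [iotaDual_eq_sum, derivative_sum, eval_finsetSum]
    exact Finset.sum_congr rfl fun ts hts => (hP _ (goodForest_of_mem_treeLists hts)).2

end IotaPullback

/-- Let `(A, φ)` be a noncommutative probability space, `Φ` the character
on `T(T_+(A))` extending `φ`, `Φ̃` the character on `H_S(A)` extending `φ`,
`ρ̃ = log^*(Φ̃)`, and `ι : T(T_+(A)) → H_S(A)` the algebra morphism with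
`ι(a_1⋯a_n) = Σ_{t ∈ ST(n)} t ⊗ a_1⋯a_n`. Then `ρ := ρ̃ ∘ ι` is an infinitesimal
character on `T(T_+(A))` and `Φ = exp^*(ρ)`. -/
theorem iota_pullback_logStar_is_monotone_infinitesimal_character
    (A : Type*) [Ring A] [Algebra ℂ A] (φ : A →ₗ[ℂ] ℂ) (hφ : φ 1 = 1) :
    IsInfCharW (iotaDual (PTree.logStarD (fun x => φ x)) : Sentence A → ℂ) ∧
    charW (fun x => φ x) = expStarW (iotaDual (PTree.logStarD (fun x => φ x))) := by
  choose P hP hρ using exists_polynomial_iotaDual (A := A) (φ := fun x => φ x) hφ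
  exact ⟨isInfCharW_of_derivative (isCharW_charW _) hP hρ,
    expStarW_of_derivative (isCharW_charW _) hP hρ⟩
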